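/- arXiv:1711.00211 — 4 statements merged into one kernel-verified Lean document; each statement's English description precedes it below -/
import Mathlib

section
/- Let d ≥ 2 and let u_0, …, u_d be unit vectors in ℝ^d such that the spherical distance δ(u_i, u_j) ≥ arccos(−1/d) − 2ε for all 0 ≤ i < j ≤ d, where 0 ≤ ε < 1/(9·d^(3.5)). Then there exist unit vectors v_0, …, v_d in ℝ^d that are the vertices of a regular simplex inscribed in the unit sphere (i.e. ⟨v_i, v_j⟩ = −1/d for all i ≠ j) such that δ(u_i, v_i) ≤ 9·d^(3.5)·ε for all i = 0, …, d. -/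
open scoped RealInnerProductSpace

lemma inner_coord {d : ℕ} (x y : EuclideanSpace ℝ (Fin d)) : ⟪x, y⟫ = ∑ k, x k * y k := by
  simp [PiLp.inner_apply, mul_comm]

/-- Operator norm is at most the Frobenius norm, for quadratic forms. -/
lemma quad_le {d : ℕ} (F : Fin d → Fin d → ℝ) (x : Fin d → ℝ) :
    (∑ k, ∑ l, F k l * (x k * x l)) ^ 2 ≤ (∑ k, ∑ l, F k l ^ 2) * (∑ k, x k ^ 2) ^ 2 := by
  have h := Finset.sum_mul_sq_le_sq_mul_sq (Finset.univ : Finset (Fin d × Fin d))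
    (fun p => F p.1 p.2) (fun p => x p.1 * x p.2)
  simp only [Fintype.sum_prod_type] at h
  refine h.trans (le_of_eq ?_)
  congr 1
  rw [sq, Finset.sum_mul_sum]
  simp only [mul_pow]

lemma frame_identity {d n : ℕ} (u : Fin n → EuclideanSpace ℝ (Fin d)) :
    ∑ k, ∑ l, (∑ i, u i k * u i l) ^ 2 = ∑ i, ∑ j, ⟪u i, u j⟫ ^ 2 := by
  simp only [inner_coord, sq, Finset.sum_mul_sum]
  have : ∀ f : Fin d → Fin d → Fin n → Fin n → ℝ,
      ∑ k, ∑ l, ∑ i, ∑ j, f k l i j = ∑ i, ∑ j, ∑ k, ∑ l, f k l i j := by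
    intro f
    have h : ∀ k, ∑ l, ∑ i, ∑ j, f k l i j = ∑ i, ∑ j, ∑ l, f k l i j := by
      intro k
      rw [Finset.sum_comm]
      refine Finset.sum_congr rfl fun i _ => ?_
      rw [Finset.sum_comm]
    simp_rw [h]
    rw [Finset.sum_comm]
    refine Finset.sum_congr rfl fun i _ => ?_
    rw [Finset.sum_comm]
  rw [this]
  refine Finset.sum_congr rfl fun i _ => Finset.sum_congr rfl fun j _ =>
    Finset.sum_congr rfl fun k _ => Finset.sum_congr rfl fun l _ => ?_
  ring

lemma frame_bound {d : ℕ} (hd : 2 ≤ d) (u : Fin (d + 1) → EuclideanSpace ℝ (Fin d))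
    (hu : ∀ i, ‖u i‖ = 1) (E : Fin (d + 1) → Fin (d + 1) → ℝ)
    (hE : ∀ i j, E i j = ⟪u i, u j⟫ + 1 / (d : ℝ) - if i = j then 1 + 1 / (d : ℝ) else 0)
    (hsum : 0 ≤ ∑ i, ∑ j, E i j)
    (η : ℝ) (hη0 : 0 ≤ η) (hη : ∑ i, ∑ j, E i j ^ 2 ≤ η ^ 2) (x : EuclideanSpace ℝ (Fin d)) :
    |∑ i, ⟪x, u i⟫ ^ 2 - (1 + 1 / (d : ℝ)) * ‖x‖ ^ 2| ≤ η * ‖x‖ ^ 2 := by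
  have hd0 : (d : ℝ) ≠ 0 := by positivity
  set c : ℝ := 1 + 1 / (d : ℝ) with hc
  set M : Fin d → Fin d → ℝ := fun k l => ∑ i, u i k * u i l with hM
  have hnx : ‖x‖ ^ 2 = ∑ k, x k ^ 2 := by
    rw [EuclideanSpace.norm_sq_eq]; simp
  have hG : ∑ i, ∑ j, ⟪u i, u j⟫ ^ 2
      = ∑ i, ∑ j, E i j ^ 2 - 2 / d * ∑ i, ∑ j, E i j + (d + 1) ^ 2 / d := by
    have h1 : ∀ i j, ⟪u i, u j⟫ ^ 2 = E i j ^ 2 - 2 / d * E i j + 1 / (d : ℝ) ^ 2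
        + if i = j then 1 - 1 / (d : ℝ) ^ 2 else 0 := by
      intro i j
      have := hE i j
      by_cases hij : i = j
      · subst hij
        have h2 : ⟪u i, u i⟫ = 1 := by rw [real_inner_self_eq_norm_sq, hu]; norm_num
        simp only [if_true, h2] at this ⊢
        rw [this, hc]; ring
      · simp only [hij, if_false] at this ⊢
        rw [this]; field_simp; ring
    simp only [h1, Finset.sum_add_distrib, Finset.sum_sub_distrib, ← Finset.mul_sum]
    simp
    field_simp
    ring
  have htr : ∑ k, M k k = d + 1 := by
    simp only [hM]
    rw [Finset.sum_comm]
    have : ∀ i, ∑ k, u i k * u i k = 1 := by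
      intro i
      rw [← inner_coord, real_inner_self_eq_norm_sq, hu]; norm_num
    simp [this]
  have hF : ∑ k, ∑ l, (M k l - if k = l then c else 0) ^ 2 ≤ η ^ 2 := by
    have h1 : ∀ k l, (M k l - if k = l then c else 0) ^ 2 =
        M k l ^ 2 + if k = l then c ^ 2 - 2 * c * M k k else 0 := by
      intro k l
      by_cases h : k = l
      · subst h; simp; ring
      · simp [h]
    simp only [h1, Finset.sum_add_distrib]
    simp only [hM]
    rw [frame_identity, hG]
    simp only [Finset.sum_ite_eq, Finset.mem_univ, if_true, Finset.sum_sub_distrib, ← Finset.mul_sum]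
    have htr' := htr
    simp only [hM] at htr'
    rw [htr']
    have h2 : (0:ℝ) ≤ 2 / d * ∑ i, ∑ j, E i j := by positivity
    have h3 : ((d:ℝ) + 1) ^ 2 / d + (∑ _k : Fin d, c ^ 2 - 2 * c * (d + 1)) = 0 := by
      simp [hc]; field_simp; ring
    linarith
  have hq : ∑ i, ⟪x, u i⟫ ^ 2 - c * ‖x‖ ^ 2
      = ∑ k, ∑ l, (M k l - if k = l then c else 0) * (x k * x l) := by
    simp only [sub_mul, Finset.sum_sub_distrib, ite_mul, zero_mul, Finset.sum_ite_eq,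
      Finset.mem_univ, if_true, hnx, Finset.mul_sum, ← sq]
    congr 1
    simp only [hM, inner_coord, sq, Finset.sum_mul_sum]
    simp only [Finset.sum_mul]
    rw [Finset.sum_comm]
    refine Finset.sum_congr rfl fun k _ => ?_
    rw [Finset.sum_comm]
    refine Finset.sum_congr rfl fun l _ => Finset.sum_congr rfl fun i _ => ?_
    ring
  have hQ := quad_le (fun k l => M k l - if k = l then c else 0) (fun k => x k)
  rw [hq]
  apply abs_le_of_sq_le_sq _ (by positivity)
  refine hQ.trans ?_
  rw [mul_pow, hnx]
  gcongr

lemma construct {d : ℕ} (hd : 2 ≤ d) (w : Fin (d + 1) → EuclideanSpace ℝ (Fin d))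
    (hw : ∑ i, w i = 0) (η : ℝ) (hη0 : 0 ≤ η) (hη : η ≤ 1 / 4)
    (hfr : ∀ x, |∑ i, ⟪x, w i⟫ ^ 2 - (1 + 1 / (d : ℝ)) * ‖x‖ ^ 2| ≤ η * ‖x‖ ^ 2) :
    ∃ v : Fin (d + 1) → EuclideanSpace ℝ (Fin d),
      (∀ i j, ⟪v i, v j⟫ = if i = j then 1 else -1 / (d : ℝ)) ∧
      (∀ i, ‖v i - w i‖ ≤ 4 / 3 * η * ‖w i‖) := by
  have hd0 : (0 : ℝ) < d := by positivity
  set c : ℝ := 1 + 1 / (d : ℝ) with hc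
  have hc1 : 1 ≤ c := by rw [hc]; have : 0 ≤ 1 / (d : ℝ) := by positivity
                         linarith
  set S : EuclideanSpace ℝ (Fin d) →ₗ[ℝ] EuclideanSpace ℝ (Fin d) :=
    ∑ i, (innerₛₗ ℝ (w i)).smulRight (w i) with hS
  have hSa : ∀ x, S x = ∑ i, ⟪w i, x⟫ • w i := by
    intro x; simp [hS, LinearMap.sum_apply]
  have hSi : ∀ x y, ⟪x, S y⟫ = ∑ i, ⟪x, w i⟫ * ⟪y, w i⟫ := by
    intro x y
    rw [hSa, inner_sum]
    refine Finset.sum_congr rfl fun i _ => ?_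
    rw [inner_smul_right, real_inner_comm y]; ring
  have hsym : S.IsSymmetric := by
    intro x y
    rw [real_inner_comm, hSi, hSi]
    exact Finset.sum_congr rfl fun i _ => mul_comm _ _
  have hfin : Module.finrank ℝ (EuclideanSpace ℝ (Fin d)) = d := by simp
  set b := hsym.eigenvectorBasis hfin with hb
  set lam := hsym.eigenvalues hfin with hlam
  have hSb : ∀ k, S (b k) = lam k • b k := fun k => hsym.apply_eigenvectorBasis hfin k
  have hbb : ∀ k l, ⟪b k, b l⟫ = if k = l then 1 else 0 := by
    intro k l
    exact orthonormal_iff_ite.mp b.orthonormal k l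
  have hcross : ∀ k l, ∑ i, ⟪b k, w i⟫ * ⟪b l, w i⟫ = if k = l then lam k else 0 := by
    intro k l
    rw [← hSi, hSb, inner_smul_right, hbb]
    by_cases h : k = l
    · subst h; simp
    · simp [h]
  have hl : ∀ k, |lam k - c| ≤ η := by
    intro k
    have h := hfr (b k)
    have h2 := hcross k k
    simp only [if_true, ← sq] at h2
    rw [h2, b.orthonormal.1 k] at h
    simpa using h
  have hlpos : ∀ k, 3 / 4 ≤ lam k := by
    intro k; have := abs_le.mp (hl k); linarith
  set t : Fin d → ℝ := fun k => √(c / lam k) with ht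
  have ht2 : ∀ k, t k ^ 2 = c / lam k := by
    intro k
    exact Real.sq_sqrt (div_nonneg (by linarith) (by linarith [hlpos k]))
  have ht0 : ∀ k, 0 ≤ t k := fun k => Real.sqrt_nonneg _
  have ht1 : ∀ k, |t k - 1| ≤ 4 / 3 * η := by
    intro k
    have h1 : |t k ^ 2 - 1| ≤ 4 / 3 * η := by
      rw [ht2]
      have hp : 0 < lam k := by linarith [hlpos k]
      have : c / lam k - 1 = (c - lam k) / lam k := by field_simp
      rw [this, abs_div, abs_of_pos hp, div_le_iff₀ hp, abs_sub_comm]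
      have := hl k
      have := hlpos k
      nlinarith
    have h2 : t k ^ 2 - 1 = (t k - 1) * (t k + 1) := by ring
    rw [h2, abs_mul, abs_of_nonneg (by linarith [ht0 k] : 0 ≤ t k + 1)] at h1
    nlinarith [abs_nonneg (t k - 1), ht0 k]
  set v : Fin (d + 1) → EuclideanSpace ℝ (Fin d) :=
    fun i => ∑ k, (t k * ⟪b k, w i⟫) • b k with hv
  have hbv : ∀ i k, ⟪b k, v i⟫ = t k * ⟪b k, w i⟫ := by
    intro i k
    simp [hv, inner_sum, inner_smul_right, hbb]
  refine ⟨v, ?_, ?_⟩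
  · -- square matrix with orthonormal rows has orthonormal columns
    let Q : Matrix (Option (Fin d)) (Fin (d + 1)) ℝ := fun o i =>
      match o with
      | none => 1 / √(d + 1)
      | some k => ⟪b k, v i⟫ / √c
    have hsw : ∀ k, ∑ i, ⟪b k, w i⟫ = 0 := by
      intro k; rw [← inner_sum, hw, inner_zero_right]
    have hQ : Q * Q.transpose = 1 := by
      ext o o'
      rw [Matrix.mul_apply]
      simp only [Matrix.transpose_apply]
      rcases o with _ | k <;> rcases o' with _ | l
      · simp only [Q]
        rw [Finset.sum_const, Matrix.one_apply_eq]
        have : √((d:ℝ) + 1) ^ 2 = d + 1 := Real.sq_sqrt (by positivity)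
        have h0 : √((d:ℝ) + 1) ≠ 0 := by positivity
        simp
        rw [← mul_inv, ← sq, this]; field_simp
      · simp only [Q, hbv]
        rw [← Finset.mul_sum, ← Finset.sum_div, ← Finset.mul_sum, hsw]
        simp [Matrix.one_apply]
      · simp only [Q, hbv]
        rw [← Finset.sum_mul, ← Finset.sum_div, ← Finset.mul_sum, hsw]
        simp [Matrix.one_apply]
      · simp only [Q, hbv]
        have : ∀ i, t k * ⟪b k, w i⟫ / √c * (t l * ⟪b l, w i⟫ / √c) =
          (t k * t l / c) * (⟪b k, w i⟫ * ⟪b l, w i⟫) := by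
          intro i
          have h0 : √c ≠ 0 := by positivity
          have : √c ^ 2 = c := Real.sq_sqrt (by linarith)
          rw [div_mul_div_comm, ← sq (√c), this]; ring
        simp only [this]
        rw [← Finset.mul_sum, hcross]
        by_cases h : k = l
        · subst h
          simp only [if_true, Matrix.one_apply_eq]
          rw [← sq, ht2]
          have := hlpos k
          have : lam k ≠ 0 := by linarith
          field_simp
        · simp [h, Matrix.one_apply]
    have e : Option (Fin d) ≃ Fin (d + 1) := Fintype.equivOfCardEq (by simp)
    have hQ' : Q.transpose * Q = 1 := (Matrix.mul_eq_one_comm_of_equiv e).mp hQ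
    intro i j
    have h := congrFun (congrFun hQ' i) j
    rw [Matrix.mul_apply, Fintype.sum_option] at h
    simp only [Matrix.transpose_apply] at h
    simp only [Q, Matrix.one_apply] at h
    have h1 : ⟪v i, v j⟫ = ∑ k, ⟪b k, v i⟫ * ⟪b k, v j⟫ := by
      rw [← b.sum_inner_mul_inner]
      exact Finset.sum_congr rfl fun k _ => by rw [real_inner_comm]
    have h2 : ∑ k, ⟪b k, v i⟫ / √c * (⟪b k, v j⟫ / √c) = ⟪v i, v j⟫ / c := by
      rw [h1, Finset.sum_div]
      refine Finset.sum_congr rfl fun k _ => ?_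
      rw [div_mul_div_comm, ← sq (√c), Real.sq_sqrt (by linarith)]
    rw [h2, div_mul_div_comm, Real.mul_self_sqrt (by positivity), one_mul] at h
    have h3 : ⟪v i, v j⟫ = c * ((if i = j then 1 else 0) - 1 / (d + 1)) := by
      rw [← h]; field_simp; ring
    rw [h3, hc]
    split_ifs
    · field_simp; ring
    · field_simp; ring
  · intro i
    apply le_of_sq_le_sq _ (by positivity)
    rw [mul_pow, ← b.sum_sq_norm_inner_right, ← b.sum_sq_norm_inner_right, Finset.mul_sum]
    refine Finset.sum_le_sum fun k _ => ?_
    rw [inner_sub_right, hbv, ← sub_one_mul, norm_mul, mul_pow]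
    gcongr
    exact ht1 k

lemma sum_sq_bound {ι : Type*} [Fintype ι] (f : ι → ℝ) (a : ℝ) (ha : ∀ i, f i ≤ a)
    (h0 : 0 ≤ ∑ i, f i) (hN : 2 ≤ Fintype.card ι) (ha0 : 0 ≤ a) :
    ∑ i, f i ^ 2 ≤ (a * Fintype.card ι) ^ 2 := by
  have hN' : (2 : ℝ) ≤ Fintype.card ι := by exact_mod_cast hN
  set N : ℝ := (Fintype.card ι : ℝ) with hNdef
  set F := ∑ i, f i with hF
  have h1 : ∑ i, (a - f i) ^ 2 ≤ (∑ i, (a - f i)) ^ 2 :=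
    Finset.sum_sq_le_sq_sum_of_nonneg fun i _ => by linarith [ha i]
  have h2 : ∑ i, (a - f i) = a * N - F := by
    rw [Finset.sum_sub_distrib]; simp [mul_comm, hNdef, hF]
  have h3 : ∑ i, (a - f i) ^ 2 = a ^ 2 * N - 2 * a * F + ∑ i, f i ^ 2 := by
    have : ∀ i, (a - f i) ^ 2 = a ^ 2 - 2 * a * f i + f i ^ 2 := fun i => by ring
    simp only [this, Finset.sum_add_distrib, Finset.sum_sub_distrib, ← Finset.mul_sum]
    simp [mul_comm, hNdef, hF]
  have h4 : F ≤ a * N := by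
    have : 0 ≤ ∑ i, (a - f i) := Finset.sum_nonneg fun i _ => by linarith [ha i]
    linarith
  rw [h2, h3] at h1
  nlinarith [mul_nonneg h0 (sub_nonneg.mpr h4), mul_nonneg (mul_nonneg ha0 h0) (sub_nonneg.mpr hN'),
    mul_nonneg (sq_nonneg a) (by linarith : 0 ≤ N)]

lemma angle_le {d : ℕ} (x y : EuclideanSpace ℝ (Fin d)) (hx : ‖x‖ = 1) (hy : ‖y‖ = 1) :
    Real.arccos ⟪x, y⟫ ≤ 1.6 * ‖x - y‖ := by
  have hpi := Real.pi_pos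
  have hb := abs_le.mp (abs_real_inner_le_norm x y)
  rw [hx, hy] at hb
  set θ := Real.arccos ⟪x, y⟫ with hθ
  have h0 : 0 ≤ θ := Real.arccos_nonneg _
  have h1 : θ ≤ Real.pi := Real.arccos_le_pi _
  have h := Real.cos_le_one_sub_mul_cos_sq (x := θ) (by rw [abs_of_nonneg h0]; exact h1)
  rw [hθ, Real.cos_arccos (by linarith) (by linarith), ← hθ] at h
  have hn : ‖x - y‖ ^ 2 = 2 - 2 * ⟪x, y⟫ := by
    rw [norm_sub_sq_real, hx, hy]; ring
  apply le_of_sq_le_sq _ (by positivity)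
  have h2 : θ ^ 2 ≤ Real.pi ^ 2 / 4 * ‖x - y‖ ^ 2 := by
    have : 2 / Real.pi ^ 2 * θ ^ 2 ≤ ‖x - y‖ ^ 2 / 2 := by linarith
    have h3 : θ ^ 2 = Real.pi ^ 2 / 2 * (2 / Real.pi ^ 2 * θ ^ 2) := by field_simp
    rw [h3]
    calc _ ≤ Real.pi ^ 2 / 2 * (‖x - y‖ ^ 2 / 2) := by gcongr
      _ = _ := by ring
  refine h2.trans ?_
  rw [mul_pow]
  gcongr
  have := Real.pi_lt_d2
  nlinarith

set_option maxHeartbeats 1000000 in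
/-- Stability of the regular simplex: if `d+1` unit vectors in `ℝ^d` have pairwise
spherical distances at least `arccos(-1/d) - 2ε` with `0 ≤ ε < 1/(9 d^{3.5})`, then
they are within spherical distance `9 d^{3.5} ε` of the vertices of a regular simplex
inscribed in the unit sphere. -/
theorem simplex_stability (d : ℕ) (hd : 2 ≤ d) (ε : ℝ)
    (hε0 : 0 ≤ ε) (hε1 : ε < 1 / (9 * (d : ℝ) ^ (3.5 : ℝ)))
    (u : Fin (d + 1) → EuclideanSpace ℝ (Fin d))
    (hu : ∀ i, ‖u i‖ = 1)
    (hdist : ∀ i j : Fin (d + 1), i ≠ j →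
      Real.arccos (-1 / (d : ℝ)) - 2 * ε ≤ Real.arccos ⟪u i, u j⟫) :
    ∃ v : Fin (d + 1) → EuclideanSpace ℝ (Fin d),
      (∀ i, ‖v i‖ = 1) ∧
      (∀ i j : Fin (d + 1), i ≠ j → ⟪v i, v j⟫ = -1 / (d : ℝ)) ∧
      (∀ i, Real.arccos ⟪u i, v i⟫ ≤ 9 * (d : ℝ) ^ (3.5 : ℝ) * ε) := by
  have hd2 : (2 : ℝ) ≤ d := by exact_mod_cast hd
  have hd0 : (0 : ℝ) < d := by linarith
  have hD : 1.4 * (d : ℝ) ^ 3 ≤ (d : ℝ) ^ (3.5 : ℝ) := by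
    have h1 : (d : ℝ) ^ (3.5 : ℝ) = √d * (d : ℝ) ^ 3 := by
      rw [Real.sqrt_eq_rpow, ← Real.rpow_natCast, ← Real.rpow_add hd0]; norm_num
    rw [h1]
    gcongr
    apply Real.le_sqrt_of_sq_le
    norm_num; linarith
  set D : ℝ := (d : ℝ) ^ (3.5 : ℝ) with hDdef
  have hDpos : 0 < D := by positivity
  have hDε : 9 * D * ε < 1 := by
    rw [lt_div_iff₀ (by positivity)] at hε1; linarith
  have hd3ε : 12.6 * ((d : ℝ) ^ 3 * ε) ≤ 9 * D * ε := by nlinarith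
  set η : ℝ := 2 * ε * (d + 1) ^ 2 with hη
  have hη0 : 0 ≤ η := by positivity
  have hηd2 : η ≤ 4.5 * ((d : ℝ) ^ 2 * ε) := by
    have : ((d : ℝ) + 1) ^ 2 ≤ 2.25 * d ^ 2 := by nlinarith
    rw [hη]; nlinarith
  have hηd : 2.8 * (η * d) ≤ 9 * D * ε := by nlinarith
  have hηD : 5.6 * η ≤ 9 * D * ε := by nlinarith
  have hη18 : η ≤ 0.18 := by linarith
  have hηinv : η ≤ 1 / (d : ℝ) := by
    rw [le_div_iff₀ hd0]; nlinarith
  have hε2 : ε ≤ 0.1 := by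
    have : (8:ℝ) ≤ (d:ℝ) ^ 3 := by nlinarith [sq_nonneg ((d:ℝ) - 2)]
    nlinarith
  -- the Gram matrix error
  set E : Fin (d + 1) → Fin (d + 1) → ℝ := fun i j =>
    ⟪u i, u j⟫ + 1 / (d : ℝ) - if i = j then 1 + 1 / (d : ℝ) else 0 with hE
  have hself : ∀ i, ⟪u i, u i⟫ = 1 := fun i => by
    rw [real_inner_self_eq_norm_sq, hu]; norm_num
  have hEle : ∀ i j, E i j ≤ 2 * ε := by
    intro i j
    by_cases hij : i = j
    · subst hij
      simp only [hE, if_true, hself]; linarith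
    · simp only [hE, hij, if_false]
      have hb := abs_le.mp (abs_real_inner_le_norm (u i) (u j))
      rw [hu, hu] at hb
      have hinv : 1 / (d : ℝ) ≤ 1 := by rw [div_le_one hd0]; linarith
      have hinv0 : 0 ≤ 1 / (d : ℝ) := by positivity
      have hneg : -1 / (d : ℝ) = -(1 / d) := by ring
      have h := hdist i j hij
      have hA : Real.pi / 2 ≤ Real.arccos (-1 / (d : ℝ)) := by
        rw [Real.arccos]
        have : Real.arcsin (-1 / (d : ℝ)) ≤ 0 := Real.arcsin_nonpos.mpr (by rw [hneg]; linarith)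
        linarith
      have hpi := Real.pi_gt_three
      have h1 := Real.cos_le_cos_of_nonneg_of_le_pi (by linarith) (Real.arccos_le_pi _) h
      rw [Real.cos_arccos (by linarith) (by linarith)] at h1
      have h2 := (abs_le.mp (Real.abs_cos_sub_cos_le (Real.arccos (-1 / (d : ℝ)) - 2 * ε)
        (Real.arccos (-1 / (d : ℝ))))).2
      rw [Real.cos_arccos (by rw [hneg]; linarith) (by rw [hneg]; linarith)] at h2
      have h3 : |Real.arccos (-1 / (d : ℝ)) - 2 * ε - Real.arccos (-1 / (d : ℝ))| = 2 * ε := by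
        rw [show Real.arccos (-1 / (d : ℝ)) - 2 * ε - Real.arccos (-1 / (d : ℝ)) = -(2 * ε) by ring,
          abs_neg, abs_of_nonneg (by linarith)]
      rw [h3] at h2
      linarith
  set s := ∑ i, u i with hs
  have hrow : ∀ i, ∑ j, E i j = ⟪s, u i⟫ := by
    intro i
    simp only [hE, Finset.sum_add_distrib, Finset.sum_sub_distrib]
    rw [← inner_sum, ← hs, real_inner_comm]
    simp
    field_simp
    ring
  have hsum : ∑ i, ∑ j, E i j = ‖s‖ ^ 2 := by
    simp only [hrow]
    rw [← inner_sum, ← hs, real_inner_self_eq_norm_sq]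
  have hsum0 : 0 ≤ ∑ i, ∑ j, E i j := by rw [hsum]; positivity
  have hE2 : ∑ i, ∑ j, E i j ^ 2 ≤ η ^ 2 := by
    have h := sum_sq_bound (fun p : Fin (d + 1) × Fin (d + 1) => E p.1 p.2) (2 * ε)
      (fun p => hEle _ _) (by simpa only [Fintype.sum_prod_type] using hsum0)
      (by simp; nlinarith) (by linarith)
    simp only [Fintype.sum_prod_type, Fintype.card_prod, Fintype.card_fin] at h
    push_cast at h
    rw [hη, sq ((d : ℝ) + 1)]
    exact h
  have hfr := frame_bound hd u hu E (fun i j => rfl) hsum0 η hη0 hE2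
  have hs2 : ‖s‖ ^ 2 ≤ (d + 1) * η ^ 2 := by
    have h1 : ∑ i, ⟪s, u i⟫ ^ 2 ≤ (d + 1) * ∑ i, ∑ j, E i j ^ 2 := by
      rw [Finset.mul_sum]
      refine Finset.sum_le_sum fun i _ => ?_
      rw [← hrow]
      have := sq_sum_le_card_mul_sum_sq (s := (Finset.univ : Finset (Fin (d + 1)))) (f := E i)
      simpa using this
    have h2 := (abs_le.mp (hfr s)).1
    have h3 : 0 ≤ (1 / (d : ℝ) - η) * ‖s‖ ^ 2 :=
      mul_nonneg (by linarith) (sq_nonneg _)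
    have h4 : ((d : ℝ) + 1) * ∑ i, ∑ j, E i j ^ 2 ≤ (d + 1) * η ^ 2 := by gcongr
    nlinarith
  have hd1 : (0 : ℝ) < d + 1 := by linarith
  set r : EuclideanSpace ℝ (Fin d) := (1 / ((d : ℝ) + 1)) • s with hr
  have hrn : ‖r‖ ≤ η := by
    rw [hr, norm_smul, Real.norm_of_nonneg (by positivity), one_div_mul_eq_div, div_le_iff₀ hd1]
    apply le_of_sq_le_sq _ (by positivity)
    nlinarith [sq_nonneg η, mul_nonneg (mul_nonneg hd0.le hd1.le) (sq_nonneg η)]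
  have hwfr : ∀ x, |∑ i, ⟪x, u i - r⟫ ^ 2 - (1 + 1 / (d : ℝ)) * ‖x‖ ^ 2|
      ≤ (η + η ^ 2) * ‖x‖ ^ 2 := by
    intro x
    have h1 : ∑ i, ⟪x, u i - r⟫ ^ 2 = ∑ i, ⟪x, u i⟫ ^ 2 - ⟪x, s⟫ ^ 2 / (d + 1) := by
      have h : ∀ i, ⟪x, u i - r⟫ ^ 2 = ⟪x, u i⟫ ^ 2 - 2 * (⟪x, s⟫ / (d + 1)) * ⟪x, u i⟫
          + (⟪x, s⟫ / (d + 1)) ^ 2 := by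
        intro i
        rw [inner_sub_right, hr, inner_smul_right]; ring
      simp only [h, Finset.sum_add_distrib, Finset.sum_sub_distrib, ← Finset.mul_sum]
      rw [← inner_sum, ← hs]
      simp
      field_simp
      ring
    have h2 : ⟪x, s⟫ ^ 2 / (d + 1) ≤ η ^ 2 * ‖x‖ ^ 2 := by
      rw [div_le_iff₀ hd1]
      have h3 : ⟪x, s⟫ ^ 2 ≤ (‖x‖ * ‖s‖) ^ 2 := by
        rw [← sq_abs]
        exact pow_le_pow_left₀ (abs_nonneg _) (abs_real_inner_le_norm x s) 2
      have h4 : ‖x‖ ^ 2 * ‖s‖ ^ 2 ≤ ‖x‖ ^ 2 * ((d + 1) * η ^ 2) := by gcongr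
      rw [mul_pow] at h3
      linarith
    have h5 : 0 ≤ ⟪x, s⟫ ^ 2 / ((d : ℝ) + 1) := by positivity
    have h6 := abs_le.mp (hfr x)
    have h7 : 0 ≤ η ^ 2 * ‖x‖ ^ 2 := by positivity
    rw [h1, abs_le]
    constructor <;> linarith [h6.1, h6.2]
  have hwsum : ∑ i, (u i - r) = 0 := by
    rw [Finset.sum_sub_distrib, ← hs]
    simp only [Finset.sum_const, Finset.card_univ, Fintype.card_fin, hr]
    rw [← Nat.cast_smul_eq_nsmul ℝ, smul_smul]
    push_cast
    rw [mul_one_div_cancel hd1.ne', one_smul, sub_self]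
  have hη2 : η + η ^ 2 ≤ 1.18 * η := by nlinarith
  obtain ⟨v, hv1, hv2⟩ := construct hd (fun i => u i - r) hwsum (η + η ^ 2) (by positivity)
    (by linarith) hwfr
  have hvn : ∀ i, ‖v i‖ = 1 := by
    intro i
    have h := hv1 i i
    rw [if_pos rfl, real_inner_self_eq_norm_sq] at h
    nlinarith [norm_nonneg (v i)]
  refine ⟨v, hvn, fun i j hij => by rw [hv1, if_neg hij], fun i => ?_⟩
  refine (angle_le _ _ (hu i) (hvn i)).trans ?_
  have hw : ‖u i - r‖ ≤ 1.18 := by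
    have := norm_sub_le (u i) r
    rw [hu] at this; linarith
  have h1 : ‖v i - (u i - r)‖ ≤ 1.9 * η := by
    refine (hv2 i).trans ?_
    calc 4 / 3 * (η + η ^ 2) * ‖u i - r‖ ≤ 4 / 3 * (1.18 * η) * 1.18 := by gcongr
      _ ≤ 1.9 * η := by nlinarith
  have h2 : ‖u i - v i‖ ≤ ‖v i - (u i - r)‖ + ‖r‖ := by
    rw [norm_sub_rev]
    have : v i - u i = (v i - (u i - r)) - r := by abel
    rw [this]
    exact norm_sub_le _ _
  linarith
end

section
/- Let u_0, u_1, u_2 be unit vectors in ℝ² such that the spherical distance δ(u_i, u_j) ≥ 2π/3 − 2ε for all 0 ≤ i < j ≤ 2, where 0 ≤ ε < π/12. Then there exist unit vectors v_0, v_1, v_2 in ℝ² that are the vertices of a regular triangle inscribed in the unit circle (i.e. ⟨v_i, v_j⟩ = −1/2 for i ≠ j) such that δ(u_i, v_i) ≤ 3ε for i = 0, 1, 2. -/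
open scoped RealInnerProductSpace


noncomputable def circPt (t : ℝ) : EuclideanSpace ℝ (Fin 2) := !₂[Real.cos t, Real.sin t]

lemma inner_circPt (a b : ℝ) : ⟪circPt a, circPt b⟫ = Real.cos (a - b) := by
  simp [circPt, PiLp.inner_apply, Fin.sum_univ_two, Real.cos_sub]
  ring

lemma norm_circPt (a : ℝ) : ‖circPt a‖ = 1 := by
  simp [circPt, EuclideanSpace.norm_eq, Fin.sum_univ_two]

lemma exists_circPt (w : EuclideanSpace ℝ (Fin 2)) (hw : ‖w‖ = 1) (t : ℝ) :
    ∃ φ : ℝ, |φ| ≤ Real.pi ∧ w = circPt (t + φ) := by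
  have h1 : w 0 ^ 2 + w 1 ^ 2 = 1 := by
    have := EuclideanSpace.norm_sq_eq w
    rw [hw] at this
    simp [Fin.sum_univ_two] at this
    linarith
  set z : ℂ := ⟨w 0, w 1⟩ with hz
  have hn : ‖z‖ = 1 := by
    have : ‖z‖ ^ 2 = 1 := by
      rw [← Complex.normSq_eq_norm_sq, Complex.normSq_apply]
      simp only [hz]; linarith
    exact (pow_eq_one_iff_of_nonneg (norm_nonneg z) two_ne_zero).1 this
  have hz0 : z ≠ 0 := by
    intro h; rw [h] at hn; simp at hn
  have hc : Real.cos z.arg = w 0 := by rw [Complex.cos_arg hz0, hn]; simp [hz]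
  have hs : Real.sin z.arg = w 1 := by rw [Complex.sin_arg, hn]; simp [hz]
  refine ⟨((z.arg - t : ℝ) : Real.Angle).toReal, Real.Angle.abs_toReal_le_pi _, ?_⟩
  have key : ((t + ((z.arg - t : ℝ) : Real.Angle).toReal : ℝ) : Real.Angle) = (z.arg : ℝ) := by
    rw [Real.Angle.coe_add, Real.Angle.coe_toReal, ← Real.Angle.coe_add]
    congr 1; ring
  have hc' := congrArg Real.Angle.cos key
  have hs' := congrArg Real.Angle.sin key
  rw [Real.Angle.cos_coe, Real.Angle.cos_coe] at hc'
  rw [Real.Angle.sin_coe, Real.Angle.sin_coe] at hs'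
  ext i
  fin_cases i
  · simp only [circPt]; rw [hc', hs']; simp [hc]
  · simp only [circPt]; rw [hc', hs']; simp [hs]

lemma arccos_cos_abs (x : ℝ) (hx : |x| ≤ Real.pi) : Real.arccos (Real.cos x) = |x| := by
  rw [← Real.cos_abs, Real.arccos_cos (abs_nonneg x) hx]

lemma cos_two_thirds : Real.cos (2 * Real.pi / 3) = -1 / 2 := by
  rw [show 2 * Real.pi / 3 = Real.pi - Real.pi / 3 by ring, Real.cos_pi_sub, Real.cos_pi_div_three]
  ring

lemma cos_four_thirds : Real.cos (4 * Real.pi / 3) = -1 / 2 := by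
  rw [show 4 * Real.pi / 3 = Real.pi / 3 + Real.pi by ring, Real.cos_add_pi,
    Real.cos_pi_div_three]
  ring

/-- Angles of the regular triangle, for one orientation. -/
lemma core_case (ε : ℝ) (hε0 : 0 ≤ ε) (hε1 : ε < Real.pi / 12) (t a b : ℝ)
    (ha : |a| ≤ Real.pi) (hb : |b| ≤ Real.pi) (ha0 : 0 ≤ a) 
    (h1 : 2 * Real.pi / 3 - 2 * ε ≤ |a|) (h2 : 2 * Real.pi / 3 - 2 * ε ≤ |b|)
    (h3 : 2 * Real.pi / 3 - 2 * ε ≤ Real.arccos (Real.cos (a - b))) :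
    ∃ m : ℝ, Real.arccos (Real.cos (t - m)) ≤ 3 * ε ∧
      Real.arccos (Real.cos (t + a - (m + 2 * Real.pi / 3))) ≤ 3 * ε ∧
      Real.arccos (Real.cos (t + b - (m - 2 * Real.pi / 3))) ≤ 3 * ε := by
  have hpi := Real.pi_pos
  rw [abs_of_nonneg ha0] at h1 ha
  have hb0 : b < 0 := by
    by_contra! hb0
    rw [abs_of_nonneg hb0] at h2 hb
    have : |a - b| ≤ Real.pi / 2 := by rw [abs_le]; constructor <;> linarith
    rw [arccos_cos_abs _ (by linarith)] at h3
    linarith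
  rw [abs_of_neg hb0] at h2 hb
  rw [← Real.cos_two_pi_sub, Real.arccos_cos (by linarith) (by linarith)] at h3
  have fin : ∀ x : ℝ, |x| ≤ 3 * ε → Real.arccos (Real.cos x) ≤ 3 * ε := fun x hx => by
    rw [arccos_cos_abs _ (by linarith)]; exact hx
  refine ⟨t + (a + b) / 3, fin _ ?_, fin _ ?_, fin _ ?_⟩ <;>
    rw [abs_le] <;> constructor <;> linarith

/-- Stability of the regular triangle on the circle: if three unit vectors in `ℝ²` have
pairwise spherical distances at least `2π/3 - 2ε` with `0 ≤ ε < π/12`, then they are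
within spherical distance `3ε` of the vertices of a regular triangle inscribed in the
unit circle. -/
theorem triangle_stability (ε : ℝ) (hε0 : 0 ≤ ε) (hε1 : ε < Real.pi / 12)
    (u : Fin 3 → EuclideanSpace ℝ (Fin 2))
    (hu : ∀ i, ‖u i‖ = 1)
    (hdist : ∀ i j : Fin 3, i ≠ j →
      2 * Real.pi / 3 - 2 * ε ≤ Real.arccos ⟪u i, u j⟫) :
    ∃ v : Fin 3 → EuclideanSpace ℝ (Fin 2),
      (∀ i, ‖v i‖ = 1) ∧
      (∀ i j : Fin 3, i ≠ j → ⟪v i, v j⟫ = -1 / 2) ∧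
      (∀ i, Real.arccos ⟪u i, v i⟫ ≤ 3 * ε) := by
  obtain ⟨t, -, h0⟩ := exists_circPt (u 0) (hu 0) 0
  rw [zero_add] at h0
  obtain ⟨a, ha, h1⟩ := exists_circPt (u 1) (hu 1) t
  obtain ⟨b, hb, h2⟩ := exists_circPt (u 2) (hu 2) t
  have d01 := hdist 0 1 (by decide)
  have d02 := hdist 0 2 (by decide)
  have d12 := hdist 1 2 (by decide)
  rw [h0, h1, inner_circPt, show t - (t + a) = -a by ring, Real.cos_neg, arccos_cos_abs _ ha] at d01
  rw [h0, h2, inner_circPt, show t - (t + b) = -b by ring, Real.cos_neg, arccos_cos_abs _ hb] at d02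
  rw [h1, h2, inner_circPt, show t + a - (t + b) = a - b by ring] at d12
  have main : ∃ m s : ℝ, (s = 1 ∨ s = -1) ∧ Real.arccos (Real.cos (t - m)) ≤ 3 * ε ∧
      Real.arccos (Real.cos (t + a - (m + s * (2 * Real.pi / 3)))) ≤ 3 * ε ∧
      Real.arccos (Real.cos (t + b - (m - s * (2 * Real.pi / 3)))) ≤ 3 * ε := by
    rcases le_total 0 a with ha0 | ha0
    · obtain ⟨m, e0, e1, e2⟩ := core_case ε hε0 hε1 t a b ha hb ha0 d01 d02 d12
      refine ⟨m, 1, Or.inl rfl, e0, ?_, ?_⟩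
      · rwa [one_mul]
      · rwa [one_mul]
    · obtain ⟨m, e0, e1, e2⟩ := core_case ε hε0 hε1 (-t) (-a) (-b) (by rwa [abs_neg])
        (by rwa [abs_neg]) (by linarith) (by rwa [abs_neg]) (by rwa [abs_neg])
        (by rwa [show -a - -b = -(a - b) by ring, Real.cos_neg])
      refine ⟨-m, -1, Or.inr rfl, ?_, ?_, ?_⟩
      · rw [← Real.cos_neg]; convert e0 using 3; ring
      · rw [← Real.cos_neg]; convert e1 using 3; ring
      · rw [← Real.cos_neg]; convert e2 using 3; ring
  obtain ⟨m, s, hs, e0, e1, e2⟩ := main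
  have c2 : Real.cos (s * (2 * Real.pi / 3)) = -1 / 2 := by
    rcases hs with rfl | rfl
    · rw [one_mul, cos_two_thirds]
    · rw [neg_one_mul, Real.cos_neg, cos_two_thirds]
  have c4 : Real.cos (s * (4 * Real.pi / 3)) = -1 / 2 := by
    rcases hs with rfl | rfl
    · rw [one_mul, cos_four_thirds]
    · rw [neg_one_mul, Real.cos_neg, cos_four_thirds]
  have i01 : ⟪circPt m, circPt (m + s * (2 * Real.pi / 3))⟫ = -1 / 2 := by
    rw [inner_circPt, ← c2, ← Real.cos_neg]; congr 1; ring
  have i02 : ⟪circPt m, circPt (m - s * (2 * Real.pi / 3))⟫ = -1 / 2 := by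
    rw [inner_circPt, ← c2]; congr 1; ring
  have i12 : ⟪circPt (m + s * (2 * Real.pi / 3)), circPt (m - s * (2 * Real.pi / 3))⟫
      = -1 / 2 := by
    rw [inner_circPt, ← c4]; congr 1; ring
  refine ⟨![circPt m, circPt (m + s * (2 * Real.pi / 3)), circPt (m - s * (2 * Real.pi / 3))],
    ?_, ?_, ?_⟩
  · intro i
    fin_cases i <;> exact norm_circPt _
  · intro i j hij
    fin_cases i <;> fin_cases j
    · exact absurd rfl hij
    · exact i01
    · exact i02
    · exact (real_inner_comm _ _).trans i01
    · exact absurd rfl hij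
    · exact i12
    · exact (real_inner_comm _ _).trans i02
    · exact (real_inner_comm _ _).trans i12
    · exact absurd rfl hij
  · intro i
    fin_cases i
    · change Real.arccos ⟪u 0, circPt m⟫ ≤ _
      rw [h0, inner_circPt]; exact e0
    · change Real.arccos ⟪u 1, circPt (m + s * (2 * Real.pi / 3))⟫ ≤ _
      rw [h1, inner_circPt]; exact e1
    · change Real.arccos ⟪u 2, circPt (m - s * (2 * Real.pi / 3))⟫ ≤ _
      rw [h2, inner_circPt]; exact e2
end

section
/- Let d ≥ 2, let 0 < ε < 1/(64·d⁴), and let X ⊂ S^{d−1} be a finite set with |X| ≥ 2d such that the spherical distance δ(x,y) ≥ π/2 − 2ε for all distinct x, y ∈ X. Then |X| = 2d, and there exist an orthonormal basis w_1, …, w_d of ℝ^d and an enumeration u_1, …, u_{2d} of X such that δ(u_i, w_i) ≤ 96·d³·ε and δ(u_{i+d}, −w_i) ≤ 96·d³·ε for i = 1, …, d. -/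
open scoped RealInnerProductSpace

lemma cps_trace {d N : ℕ} (hd : 0 < d) (v : Fin N → EuclideanSpace ℝ (Fin d))
    (hv : ∀ i, ‖v i‖ = 1) :
    (N:ℝ)^2 ≤ d * ∑ i, ∑ j, ⟪v i, v j⟫^2 := by
  have hin : ∀ x y : EuclideanSpace ℝ (Fin d), ⟪x, y⟫ = ∑ k, x k * y k := by
    intro x y
    simp [PiLp.inner_apply, mul_comm]
  have h1 : ∑ i, ∑ j, ⟪v i, v j⟫^2 = ∑ k, ∑ l, (∑ i, v i k * v i l)^2 := by
    have e1 : ∀ i j, ⟪v i, v j⟫^2 = ∑ k, ∑ l, (v i k * v i l) * (v j k * v j l) := by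
      intro i j
      rw [hin, sq, Finset.sum_mul_sum]
      refine Finset.sum_congr rfl fun k _ => Finset.sum_congr rfl fun l _ => by ring
    have e2 : ∀ k l, (∑ i, v i k * v i l)^2 = ∑ i, ∑ j, (v i k * v i l) * (v j k * v j l) := by
      intro k l
      rw [sq, Finset.sum_mul_sum]
    simp only [e1, e2]
    have e3 : ∀ i, ∑ j, ∑ k, ∑ l, (v i k * v i l) * (v j k * v j l)
        = ∑ k, ∑ l, ∑ j, (v i k * v i l) * (v j k * v j l) := by
      intro i
      rw [Finset.sum_comm]
      exact Finset.sum_congr rfl fun k _ => Finset.sum_comm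
    simp only [e3]
    rw [Finset.sum_comm]
    exact Finset.sum_congr rfl fun k _ => Finset.sum_comm
  have h2 : ∑ k, (∑ i, v i k * v i k)^2 ≤ ∑ k, ∑ l, (∑ i, v i k * v i l)^2 := by
    refine Finset.sum_le_sum fun k _ => ?_
    exact Finset.single_le_sum (f := fun l => (∑ i, v i k * v i l)^2)
      (fun l _ => sq_nonneg _) (Finset.mem_univ k)
  have h3 : ∑ k, (∑ i, v i k * v i k) = N := by
    rw [Finset.sum_comm]
    have : ∀ i, ∑ k, v i k * v i k = 1 := by
      intro i
      rw [← hin, real_inner_self_eq_norm_sq, hv]; norm_num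
    simp [this]
  have h4 := sq_sum_le_card_mul_sum_sq (s := (Finset.univ : Finset (Fin d)))
    (f := fun k => ∑ i, v i k * v i k)
  rw [h3] at h4
  simp only [Finset.card_univ, Fintype.card_fin] at h4
  rw [h1]
  refine h4.trans ?_
  gcongr

lemma cps_sum_nonneg {d N : ℕ} (v : Fin N → EuclideanSpace ℝ (Fin d)) :
    0 ≤ ∑ i, ∑ j, ⟪v i, v j⟫ := by
  have : ∑ i, ∑ j, ⟪v i, v j⟫ = ⟪∑ i, v i, ∑ j, v j⟫ := by
    rw [sum_inner]
    exact Finset.sum_congr rfl fun i _ => (inner_sum _ _ _).symm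
  rw [this]
  exact real_inner_self_nonneg

lemma cps_frame {ι E : Type*} [DecidableEq ι] [NormedAddCommGroup E] [InnerProductSpace ℝ E]
    (s : Finset ι) (x : ι → E) (τ : ℝ) (hx : ∀ i, ‖x i‖ = 1)
    (hτ0 : 0 ≤ τ)
    (hτ : ∀ i j, i ≠ j → |⟪x i, x j⟫| ≤ τ) (hc : (s.card : ℝ) * τ ≤ 1/4) (c : ι → ℝ) :
    3/4 * ∑ i ∈ s, c i ^2 ≤ ‖∑ i ∈ s, c i • x i‖^2 ∧
    3/4 * ‖∑ i ∈ s, c i • x i‖^2 ≤ ∑ i ∈ s, ⟪∑ i ∈ s, c i • x i, x i⟫^2 := by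
  have hA : 3/4 * ∑ i ∈ s, c i ^2 ≤ ‖∑ i ∈ s, c i • x i‖^2 := by
    have e : ‖∑ i ∈ s, c i • x i‖^2 = ∑ i ∈ s, ∑ j ∈ s, c i * c j * ⟪x i, x j⟫ := by
      rw [← real_inner_self_eq_norm_sq, sum_inner]
      refine Finset.sum_congr rfl fun i _ => ?_
      rw [inner_sum]
      refine Finset.sum_congr rfl fun j _ => ?_
      rw [real_inner_smul_left, real_inner_smul_right]; ring
    have p : ∀ i ∈ s, ∀ j ∈ s, (if i = j then c i ^2 else 0) - τ * (c i^2 + c j^2)/2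
        ≤ c i * c j * ⟪x i, x j⟫ := by
      intro i _ j _
      split_ifs with h
      · subst h
        rw [real_inner_self_eq_norm_sq, hx]
        nlinarith [mul_nonneg hτ0 (sq_nonneg (c i))]
      · have h1 := hτ i j h
        have h2 : |c i * c j * ⟪x i, x j⟫| ≤ |c i * c j| * τ := by
          rw [abs_mul]; gcongr
        have h3 : |c i * c j| ≤ (c i^2 + c j^2)/2 := by
          rw [abs_le]; constructor <;> nlinarith [sq_nonneg (c i + c j), sq_nonneg (c i - c j)]
        have h4 := (abs_le.mp h2).1
        nlinarith [mul_le_mul_of_nonneg_right h3 hτ0]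
    have q := Finset.sum_le_sum fun i hi => Finset.sum_le_sum (p i hi)
    rw [← e] at q
    refine le_trans ?_ q
    have : ∑ i ∈ s, ∑ j ∈ s, ((if i = j then c i ^2 else 0) - τ * (c i^2 + c j^2)/2)
      = ∑ i ∈ s, c i^2 - τ * s.card * ∑ i ∈ s, c i^2 := by
      have : ∀ i ∈ s, ∑ j ∈ s, ((if i = j then c i ^2 else 0) - τ * (c i^2 + c j^2)/2)
        = c i^2 - (τ/2 * s.card * c i^2 + τ/2 * ∑ j ∈ s, c j^2) := by
        intro i hi
        rw [Finset.sum_sub_distrib, Finset.sum_ite_eq, if_pos hi, Finset.mul_sum]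
        congr 1
        have : ∀ j ∈ s, τ * (c i^2 + c j^2)/2 = τ/2 * c i^2 + τ/2 * c j^2 := fun j _ => by ring
        rw [Finset.sum_congr rfl this, Finset.sum_add_distrib, Finset.sum_const, nsmul_eq_mul]
        ring
      rw [Finset.sum_congr rfl this, Finset.sum_sub_distrib, Finset.sum_add_distrib,
        ← Finset.mul_sum, Finset.sum_const, nsmul_eq_mul]
      ring
    rw [this]
    have := Finset.sum_nonneg (s := s) (f := fun i => c i^2) (fun i _ => sq_nonneg _)
    nlinarith [mul_le_mul_of_nonneg_right hc this]
  refine ⟨hA, ?_⟩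
  set v := ∑ i ∈ s, c i • x i with hv
  have e : ‖v‖^2 = ∑ i ∈ s, c i * ⟪v, x i⟫ := by
    rw [← real_inner_self_eq_norm_sq]
    nth_rw 2 [hv]
    rw [inner_sum]
    exact Finset.sum_congr rfl fun i _ => real_inner_smul_right _ _ _
  have : ∑ i ∈ s, c i * ⟪v, x i⟫ ≤ ∑ i ∈ s, (3/8 * c i^2 + 2/3 * ⟪v, x i⟫^2) := by
    refine Finset.sum_le_sum fun i _ => ?_
    nlinarith [sq_nonneg (3 * c i - 4 * ⟪v, x i⟫)]
  rw [Finset.sum_add_distrib, ← Finset.mul_sum, ← Finset.mul_sum] at this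
  linarith

lemma cps_angle {E : Type*} [NormedAddCommGroup E] [InnerProductSpace ℝ E] (u v : E)
    (hu : ‖u‖ = 1) (hv : ‖v‖ = 1) (r : ℝ) (hr : 0 ≤ r) (h : ‖u - v‖^2 ≤ r^2) :
    Real.arccos ⟪u, v⟫ ≤ 1.6 * r := by
  have ht : |⟪u, v⟫| ≤ 1 := by simpa [hu, hv] using abs_real_inner_le_norm u v
  have ht' := abs_le.mp ht
  have h0 := Real.arccos_nonneg ⟪u, v⟫
  have h1 := Real.arccos_le_pi ⟪u, v⟫
  have hc := Real.cos_le_one_sub_mul_cos_sq (x := Real.arccos ⟪u, v⟫) (by rw [abs_of_nonneg h0]; exact h1)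
  rw [Real.cos_arccos ht'.1 ht'.2] at hc
  rw [norm_sub_sq_real, hu, hv] at h
  have hpi := Real.pi_pos
  have hpi2 := Real.pi_lt_d2
  set θ := Real.arccos ⟪u, v⟫
  have h3 : θ^2 ≤ (Real.pi/2)^2 * r^2 := by
    have : 2 / Real.pi^2 * θ^2 ≤ r^2/2 := by linarith
    rw [div_mul_eq_mul_div, div_le_iff₀ (by positivity)] at this
    nlinarith
  have h4 : θ ≤ Real.pi/2 * r := by
    rw [← mul_pow] at h3
    exact le_of_sq_le_sq h3 (by positivity)
  nlinarith

lemma cps_inner_le (t ε : ℝ) (ht : |t| ≤ 1) (hε : 0 < ε) (hε1 : ε < 1/4)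
    (h : Real.pi/2 - 2 * ε ≤ Real.arccos t) : t ≤ 2 * ε := by
  have ht' := abs_le.mp ht
  have hpi := Real.pi_gt_three
  unfold Real.arccos at h
  have h1 : Real.arcsin t ≤ 2 * ε := by linarith
  have h2 : t = Real.sin (Real.arcsin t) := (Real.sin_arcsin ht'.1 ht'.2).symm
  have h3 : t ≤ Real.sin (2*ε) := by
    rw [h2]
    exact Real.sin_le_sin_of_le_of_le_pi_div_two (Real.neg_pi_div_two_le_arcsin t) (by linarith) h1
  exact h3.trans (Real.sin_le (by linarith))

set_option maxHeartbeats 1000000 in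
lemma cps_geom {d : ℕ} (hd : 2 ≤ d) (x y : Fin d → EuclideanSpace ℝ (Fin d)) (τ : ℝ)
    (hτ0 : 0 ≤ τ) (hdτ : d * τ ≤ 1/4)
    (hx : ∀ i, ‖x i‖ = 1) (hy : ∀ i, ‖y i‖ = 1)
    (hxx : ∀ i j, i ≠ j → |⟪x i, x j⟫| ≤ τ)
    (hyx : ∀ i j, i ≠ j → |⟪y i, x j⟫| ≤ τ)
    (hxy : ∀ i, ⟪x i, y i⟫ ≤ -1 + τ) :
    ∃ w : Fin d → EuclideanSpace ℝ (Fin d), Orthonormal ℝ w ∧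
      ∀ i, Real.arccos ⟪x i, w i⟫ ≤ 10 * d * τ ∧ Real.arccos ⟪y i, -(w i)⟫ ≤ 10 * d * τ := by
  have hd' : (2:ℝ) ≤ d := by exact_mod_cast hd
  have hfr := fun (s : Finset (Fin d)) => cps_frame s x τ hx hτ0 hxx (by
    have h1 : (s.card : ℝ) ≤ d := by
      have := s.card_le_univ
      rw [Fintype.card_fin] at this
      exact_mod_cast this
    exact (mul_le_mul_of_nonneg_right h1 hτ0).trans hdτ)
  have hli : LinearIndependent ℝ x := by
    rw [Fintype.linearIndependent_iff]
    intro g hg i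
    have h := (hfr Finset.univ g).1
    rw [hg] at h
    have h2 := Finset.single_le_sum (f := fun i => g i ^ 2) (fun i _ => sq_nonneg (g i))
      (Finset.mem_univ i)
    have : g i ^2 ≤ 0 := by
      simp at h h2 ⊢
      nlinarith
    nlinarith
  have hspan : Submodule.span ℝ (Set.range x) = ⊤ :=
    hli.span_eq_top_of_card_eq_finrank' (by simp)
  refine ⟨InnerProductSpace.gramSchmidtNormed ℝ x, InnerProductSpace.gramSchmidtNormed_orthonormal hli, ?_⟩
  intro k
  set w := InnerProductSpace.gramSchmidtNormed ℝ x k with hw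
  have hw1 : ‖w‖ = 1 := InnerProductSpace.gramSchmidtNormed_unit_length k hli
  set g := InnerProductSpace.gramSchmidt ℝ x k with hg
  -- the projection part
  have hp : 3/4 * ‖x k - g‖^2 ≤ d * τ^2 := by
    have hmem : x k - g ∈ Submodule.span ℝ (x '' ((Finset.Iio k : Finset (Fin d)) : Set (Fin d))) := by
      rw [Finset.coe_Iio, ← InnerProductSpace.span_gramSchmidt_Iio ℝ x k]
      have h := InnerProductSpace.gramSchmidt_def'' ℝ x k
      rw [← hg] at h
      have h' : x k - g = ∑ i ∈ Finset.Iio k, (⟪InnerProductSpace.gramSchmidt ℝ x i, x k⟫ /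
          ((‖InnerProductSpace.gramSchmidt ℝ x i‖ : ℝ)) ^ 2) • InnerProductSpace.gramSchmidt ℝ x i := by
        rw [sub_eq_iff_eq_add']
        exact h
      rw [h']
      refine Submodule.sum_mem _ fun i hi => Submodule.smul_mem _ _ (Submodule.subset_span ?_)
      exact ⟨i, by simpa using hi, rfl⟩
    obtain ⟨c, hc⟩ := (Submodule.mem_span_image_finset_iff_exists_fun' ℝ).mp hmem
    have h := (hfr (Finset.Iio k) c).2
    rw [hc] at h
    refine h.trans ?_
    have : ∀ i ∈ Finset.Iio k, ⟪x k - g, x i⟫^2 ≤ τ^2 := by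
      intro i hi
      have hik : i < k := by simpa using hi
      rw [inner_sub_left, InnerProductSpace.gramSchmidt_inv_triangular ℝ x hik, sub_zero]
      exact sq_le_sq.mpr ((hxx k i hik.ne').trans (le_abs_self τ))
    refine (Finset.sum_le_sum this).trans ?_
    rw [Finset.sum_const, nsmul_eq_mul]
    gcongr
    have := (Finset.Iio k).card_le_univ
    rwa [Fintype.card_fin] at this
  have hgx : ⟪x k, g⟫ = ‖g‖^2 := by
    have h := InnerProductSpace.gramSchmidt_def'' ℝ x k
    rw [h, inner_add_left, sum_inner, real_inner_self_eq_norm_sq, ← hg]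
    have : ∀ i ∈ Finset.Iio k, ⟪(⟪InnerProductSpace.gramSchmidt ℝ x i, x k⟫ /
          ((‖InnerProductSpace.gramSchmidt ℝ x i‖ : ℝ)) ^ 2) • InnerProductSpace.gramSchmidt ℝ x i, g⟫ = 0 := by
      intro i hi
      have hik : i < k := by simpa using hi
      rw [real_inner_smul_left, hg, InnerProductSpace.gramSchmidt_orthogonal ℝ x hik.ne, mul_zero]
    erw [Finset.sum_eq_zero this]
    ring
  have hg0 : 0 < ‖g‖ := norm_pos_iff.mpr (InnerProductSpace.gramSchmidt_ne_zero k hli)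
  have hxw : ⟪x k, w⟫ = ‖g‖ := by
    have : w = (‖g‖)⁻¹ • g := rfl
    rw [this, real_inner_smul_right, hgx]
    field_simp
  have hpg : ‖x k - g‖^2 = 1 - ‖g‖^2 := by
    rw [norm_sub_sq_real, hgx, hx]; ring
  have hxw2 : ‖x k - w‖^2 ≤ (1.2 * d * τ)^2 := by
    rw [norm_sub_sq_real, hxw, hx, hw1]
    have hg1 : ‖g‖ ≤ 1 := by nlinarith [sq_nonneg ‖x k - g‖]
    have : (d:ℝ) * τ^2 ≤ d^2 * τ^2 / 2 := by nlinarith [sq_nonneg τ, mul_nonneg (sq_nonneg τ) (by linarith : (0:ℝ) ≤ d)]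
    nlinarith [sq_nonneg (d * τ)]
  have he2 : ‖x k + y k‖^2 ≤ (2 * d * τ)^2 := by
    have hn : ‖x k + y k‖^2 = 2 + 2 * ⟪x k, y k⟫ := by
      rw [norm_add_sq_real, hx, hy]; ring
    have hmem : x k + y k ∈ Submodule.span ℝ (x '' ((Finset.univ : Finset (Fin d)) : Set (Fin d))) := by
      rw [Finset.coe_univ, Set.image_univ, hspan]; trivial
    obtain ⟨c, hc⟩ := (Submodule.mem_span_image_finset_iff_exists_fun' ℝ).mp hmem
    have h := (hfr Finset.univ c).2
    rw [hc] at h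
    set q := ‖x k + y k‖^2 with hq
    have hq0 : 0 ≤ q := sq_nonneg _
    have hb : ∀ j ∈ Finset.univ, ⟪x k + y k, x j⟫^2 ≤ (if k = j then (q/2)^2 else 0) + 4 * τ^2 := by
      intro j _
      split_ifs with hkj
      · subst hkj
        have : ⟪x k + y k, x k⟫ = q/2 := by
          rw [inner_add_left, real_inner_self_eq_norm_sq, hx, real_inner_comm, hn]; ring
        rw [this]; nlinarith [sq_nonneg τ]
      · have h1 := abs_le.mp (hxx k j hkj)
        have h2 := abs_le.mp (hyx k j hkj)
        rw [inner_add_left]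
        nlinarith
    have hs := Finset.sum_le_sum hb
    rw [Finset.sum_add_distrib, Finset.sum_ite_eq, if_pos (Finset.mem_univ k), Finset.sum_const,
      nsmul_eq_mul, Finset.card_univ, Fintype.card_fin] at hs
    have hq1 : q ≤ 1 := by
      have := hxy k
      nlinarith
    have : (d:ℝ) * τ^2 ≤ d^2 * τ^2 / 2 := by nlinarith [sq_nonneg τ, mul_nonneg (sq_nonneg τ) (by linarith : (0:ℝ) ≤ d)]
    nlinarith
  have hdτ0 : 0 ≤ d * τ := by positivity
  constructor
  · refine (cps_angle (x k) w (hx k) hw1 (1.2 * d * τ) (by positivity) hxw2).trans ?_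
    linarith
  · have h1 : ‖x k - w‖ ≤ 1.2 * d * τ := le_of_sq_le_sq hxw2 (by positivity)
    have h2 : ‖x k + y k‖ ≤ 2 * d * τ := le_of_sq_le_sq he2 (by positivity)
    have h3 : ‖y k - (-w)‖ ≤ 3.2 * d * τ := by
      have : y k - (-w) = (x k + y k) - (x k - w) := by abel
      rw [this]
      refine (norm_sub_le _ _).trans ?_
      linarith
    refine (cps_angle (y k) (-w) (hy k) (by rw [norm_neg, hw1]) (3.2 * d * τ) (by positivity) ?_).trans ?_
    · exact pow_le_pow_left₀ (norm_nonneg _) h3 2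
    · linarith

lemma cps_delsarte {d N : ℕ} (hd : 0 < d) (v : Fin N → EuclideanSpace ℝ (Fin d))
    (hv : ∀ i, ‖v i‖ = 1) (σ : ℝ) (hσ : 0 ≤ σ)
    (hvv : ∀ i j, i ≠ j → ⟪v i, v j⟫ ≤ σ) :
    (N:ℝ)^2/d ≤ 2 * N + N * (N-1) * (σ^2+σ) ∧
    ∀ i j, i ≠ j → 2 * (σ^2 + σ - (⟪v i, v j⟫^2 + ⟪v i, v j⟫)) ≤
      N * (N-1) * (σ^2+σ) + 2 * N - N^2/d := by
  have hd' : (0:ℝ) < d := by exact_mod_cast hd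
  have h1 := cps_trace hd v hv
  have h2 := cps_sum_nonneg v
  have h1' : (N:ℝ)^2/d ≤ ∑ i, ∑ j, ⟪v i, v j⟫^2 := by
    rw [div_le_iff₀ hd']; linarith
  let F : Fin N × Fin N → ℝ := fun p => (σ^2 + σ) - (⟪v p.1, v p.2⟫^2 + ⟪v p.1, v p.2⟫)
    - if p.1 = p.2 then σ^2+σ-2 else 0
  have hF0 : ∀ p, 0 ≤ F p := by
    rintro ⟨i, j⟩
    simp only [F]
    split_ifs with h
    · subst h
      rw [real_inner_self_eq_norm_sq, hv]; norm_num
    · have h3 := hvv i j h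
      have h4 : |⟪v i, v j⟫| ≤ 1 := by simpa [hv] using abs_real_inner_le_norm (v i) (v j)
      have h5 := (abs_le.mp h4).1
      nlinarith
  have hFs : ∑ p, F p ≤ N * (N-1) * (σ^2+σ) + 2 * N - N^2/d := by
    have : ∑ p, F p = N * N * (σ^2+σ) - (∑ i, ∑ j, ⟪v i, v j⟫^2 + ∑ i, ∑ j, ⟪v i, v j⟫)
        - N * (σ^2+σ-2) := by
      rw [Fintype.sum_prod_type]
      simp only [F, Finset.sum_sub_distrib, Finset.sum_add_distrib, Finset.sum_const,
        Finset.sum_ite_eq, Finset.mem_univ, if_true, nsmul_eq_mul, Finset.card_univ,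
        Fintype.card_fin]
      ring
    rw [this]
    nlinarith
  have hnn := Finset.sum_nonneg (s := Finset.univ) (fun p _ => hF0 p)
  refine ⟨by linarith, fun i j hij => ?_⟩
  have hne : ((i,j) : Fin N × Fin N) ≠ (j,i) := by
    intro h; exact hij (Prod.ext_iff.mp h).1
  have h6 := Finset.sum_le_sum_of_subset_of_nonneg (f := F)
    (Finset.subset_univ ({(i,j),(j,i)} : Finset (Fin N × Fin N))) (fun p _ _ => hF0 p)
  rw [Finset.sum_pair hne] at h6
  simp only [F, if_neg hij, if_neg hij.symm, real_inner_comm (v i) (v j)] at h6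
  simp only [F] at hFs
  linarith

/-- Antipodal matching. -/
lemma cps_match {d : ℕ} (hd : 2 ≤ d) (v : Fin (2*d) → EuclideanSpace ℝ (Fin d))
    (hv : ∀ i, ‖v i‖ = 1) (τ : ℝ) (hτ0 : 0 ≤ τ) (hτ : τ * (64 * d^2) ≤ 9)
    (hvv : ∀ i j, i ≠ j → |⟪v i, v j⟫| ≤ τ ∨ ⟪v i, v j⟫ ≤ -1 + τ) :
    ∃ a : Fin (2*d) → Fin (2*d), (∀ i, a i ≠ i) ∧ (∀ i, a (a i) = i) ∧
      (∀ i, ⟪v i, v (a i)⟫ ≤ -1 + τ) ∧ ∀ i j, j ≠ i → j ≠ a i → |⟪v i, v j⟫| ≤ τ := by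
  have hd' : (2:ℝ) ≤ d := by exact_mod_cast hd
  have hd2 : (4:ℝ) ≤ (d:ℝ)^2 := by nlinarith
  have hτ1 : τ ≤ 9/256 := by nlinarith
  have huniq : ∀ i j k, ⟪v i, v j⟫ ≤ -1 + τ → ⟪v i, v k⟫ ≤ -1 + τ → j = k := by
    intro i j k hj hk
    by_contra hjk
    have h1 : ‖v i + v j‖^2 ≤ 2 * τ := by rw [norm_add_sq_real, hv, hv]; linarith
    have h2 : ‖v i + v k‖^2 ≤ 2 * τ := by rw [norm_add_sq_real, hv, hv]; linarith
    have h3 : ‖v j - v k‖ ≤ ‖v i + v j‖ + ‖v i + v k‖ := by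
      have : v j - v k = (v i + v j) - (v i + v k) := by abel
      rw [this]; exact norm_sub_le _ _
    have h4 : ‖v j - v k‖^2 ≤ 8 * τ := by
      have := norm_nonneg (v j - v k)
      nlinarith [sq_nonneg (‖v i + v j‖ - ‖v i + v k‖)]
    rw [norm_sub_sq_real, hv, hv] at h4
    have h5 : ⟪v j, v k⟫ ≤ τ := by
      rcases hvv j k hjk with h | h
      · exact (abs_le.mp h).2
      · linarith
    linarith
  have hle : ∀ i j, ⟪v i, v j⟫^2 ≤ 1 := by
    intro i j
    have h4 : |⟪v i, v j⟫| ≤ 1 := by simpa [hv] using abs_real_inner_le_norm (v i) (v j)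
    nlinarith [sq_abs ⟪v i, v j⟫, abs_nonneg ⟪v i, v j⟫]
  have hex : ∀ i, ∃ j, ⟪v i, v j⟫ ≤ -1 + τ := by
    by_contra hcon
    push Not at hcon
    obtain ⟨i0, hi0⟩ := hcon
    have hsq : ∀ i j, |⟪v i, v j⟫| ≤ τ → ⟪v i, v j⟫^2 ≤ τ^2 := fun i j h =>
      sq_le_sq.mpr (h.trans (le_abs_self τ))
    have hrow : ∀ i, ∑ j, ⟪v i, v j⟫^2 ≤ 2 * d * τ^2 + 1 + 1 - (if i0 = i then 1 else 0) := by
      intro i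
      by_cases hi : ∃ j, ⟪v i, v j⟫ ≤ -1 + τ
      · have hne : i0 ≠ i := by
          rintro rfl
          obtain ⟨j, hj⟩ := hi
          linarith [hi0 j]
        obtain ⟨b, hb⟩ := hi
        have : ∀ j ∈ Finset.univ, ⟪v i, v j⟫^2 ≤ τ^2 + (if i = j then 1 else 0) + (if b = j then 1 else 0) := by
          intro j _
          by_cases h1 : i = j
          · rw [if_pos h1]
            have := hle i j
            split_ifs <;> nlinarith
          · by_cases h2 : b = j
            · rw [if_pos h2, if_neg h1]
              have := hle i j
              nlinarith
            · rw [if_neg h2, if_neg h1]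
              rcases hvv i j h1 with h | h
              · linarith [hsq i j h]
              · exact absurd (huniq i b j hb h) h2
        have := Finset.sum_le_sum this
        simp [Finset.sum_add_distrib] at this
        rw [if_neg hne]; linarith
      · have : ∀ j ∈ Finset.univ, ⟪v i, v j⟫^2 ≤ τ^2 + (if i = j then 1 else 0) := by
          intro j _
          by_cases h1 : i = j
          · rw [if_pos h1]
            have := hle i j
            nlinarith
          · rw [if_neg h1]
            rcases hvv i j h1 with h | h
            · linarith [hsq i j h]
            · exact absurd ⟨j, h⟩ hi
        have := Finset.sum_le_sum this
        simp [Finset.sum_add_distrib] at this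
        split_ifs <;> linarith
    have hs := Finset.sum_le_sum (fun i (_ : i ∈ Finset.univ) => hrow i)
    have ht := cps_trace (by omega) v hv
    rw [Finset.sum_sub_distrib, Finset.sum_ite_eq, if_pos (Finset.mem_univ _), Finset.sum_const,
      nsmul_eq_mul, Finset.card_univ, Fintype.card_fin] at hs
    push_cast at hs ht
    have ht' : 4 * (d:ℝ) ≤ ∑ i, ∑ j, ⟪v i, v j⟫^2 := by
      have : (d:ℝ) * (4 * d) ≤ d * ∑ i, ∑ j, ⟪v i, v j⟫^2 := by nlinarith
      exact le_of_mul_le_mul_left this (by linarith)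
    have hdt : (d * τ) ≤ 9/128 := by nlinarith
    have hdt0 : 0 ≤ d * τ := by positivity
    nlinarith
  choose a ha using hex
  have hai : ∀ i, a i ≠ i := by
    intro i h
    have := ha i
    rw [h, real_inner_self_eq_norm_sq, hv] at this
    linarith
  refine ⟨a, hai, ?_, ha, ?_⟩
  · intro i
    refine huniq (a i) _ _ (ha (a i)) ?_
    rw [real_inner_comm]; exact ha i
  · intro i j h1 h2
    rcases hvv i j h1.symm with h | h
    · exact h
    · exact absurd (huniq i j (a i) h (ha i)) h2

/-- Choosing a half. -/
lemma cps_half {d : ℕ} (a : Fin (2*d) → Fin (2*d)) (hai : ∀ i, a i ≠ i)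
    (haa : ∀ i, a (a i) = i) :
    ∃ p : Fin d → Fin (2*d), (∀ i j, i ≠ j → p i ≠ p j ∧ p i ≠ a (p j)) ∧
      ∀ k, ∃ i, p i = k ∨ a (p i) = k := by
  let A : Finset (Fin (2*d)) := Finset.univ.filter fun i => i < a i
  have hinj : Function.Injective a := fun i j h => by rw [← haa i, h, haa]
  have hAc : Aᶜ = A.image a := by
    ext i
    simp only [A, Finset.mem_compl, Finset.mem_filter, Finset.mem_univ, true_and, Finset.mem_image,
      not_lt]
    constructor
    · intro h
      exact ⟨a i, by rw [haa]; exact lt_of_le_of_ne h (hai i), haa i⟩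
    · rintro ⟨j, hj, rfl⟩
      rw [haa]; exact hj.le
  have hcard : A.card = d := by
    have h1 := Finset.card_add_card_compl A
    rw [hAc, Finset.card_image_of_injective _ hinj, Fintype.card_fin] at h1
    omega
  let e := A.equivFinOfCardEq hcard
  refine ⟨fun i => (e.symm i : Fin (2*d)), ?_, ?_⟩
  · intro i j hij
    refine ⟨fun h => hij (e.symm.injective (Subtype.ext h)), fun h => ?_⟩
    have h1 : ((e.symm i : Fin (2*d))) ∈ Aᶜ := by
      rw [hAc]
      change (e.symm i : Fin (2*d)) = a (e.symm j : Fin (2*d)) at h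
      rw [h]
      exact Finset.mem_image_of_mem _ (e.symm j).2
    exact (Finset.mem_compl.mp h1) (e.symm i).2
  · intro k
    by_cases hk : k ∈ A
    · exact ⟨e ⟨k, hk⟩, Or.inl (by simp)⟩
    · have : k ∈ A.image a := by rw [← hAc]; exact Finset.mem_compl.mpr hk
      obtain ⟨j, hj, rfl⟩ := Finset.mem_image.mp this
      exact ⟨e ⟨j, hj⟩, Or.inr (by simp)⟩

/-- Stability of the regular crosspolytope: if at least `2d` unit vectors in `ℝ^d` have
pairwise spherical distances at least `π/2 - 2ε` with `0 < ε < 1/(64 d⁴)`, then there are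
exactly `2d` of them, and they are within spherical distance `96 d³ ε` of the vertices
`±w_1, …, ±w_d` of a regular crosspolytope given by an orthonormal basis `w_1, …, w_d`. -/
theorem crosspolytope_stability (d : ℕ) (hd : 2 ≤ d) (ε : ℝ)
    (hε0 : 0 < ε) (hε1 : ε < 1 / (64 * (d : ℝ) ^ 4))
    (X : Finset (EuclideanSpace ℝ (Fin d)))
    (hXcard : 2 * d ≤ X.card)
    (hXunit : ∀ x ∈ X, ‖x‖ = 1)
    (hdist : ∀ x ∈ X, ∀ y ∈ X, x ≠ y →
      Real.pi / 2 - 2 * ε ≤ Real.arccos ⟪x, y⟫) :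
    X.card = 2 * d ∧
    ∃ w : Fin d → EuclideanSpace ℝ (Fin d), Orthonormal ℝ w ∧
      ∃ u : Fin (2 * d) → EuclideanSpace ℝ (Fin d),
        Function.Injective u ∧ (∀ i, u i ∈ X) ∧ (∀ x ∈ X, ∃ i, u i = x) ∧
        ∀ i : Fin d,
          Real.arccos ⟪u ⟨i.1, by have := i.2; omega⟩, w i⟫ ≤ 96 * (d : ℝ) ^ 3 * ε ∧
          Real.arccos ⟪u ⟨i.1 + d, by have := i.2; omega⟩, -(w i)⟫ ≤ 96 * (d : ℝ) ^ 3 * ε := by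
  classical
  have hd' : (2:ℝ) ≤ d := by exact_mod_cast hd
  have hd4 : ε * (64 * (d:ℝ)^4) < 1 := by
    rwa [lt_div_iff₀ (by positivity)] at hε1
  have hd3 : (8:ℝ) ≤ (d:ℝ)^3 := by
    have : (2:ℝ)^3 ≤ (d:ℝ)^3 := by gcongr
    linarith
  have hd2 : (4:ℝ) ≤ (d:ℝ)^2 := by nlinarith
  have hεd2 : ε * (64 * (d:ℝ)^2) ≤ 1/4 := by nlinarith [mul_nonneg hε0.le (sq_nonneg (d:ℝ))]
  have hεs : ε ≤ 1/1024 := by nlinarith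
  have hin : ∀ x ∈ X, ∀ y ∈ X, x ≠ y → ⟪x, y⟫ ≤ 2 * ε := by
    intro x hx y hy hxy
    refine cps_inner_le _ ε ?_ hε0 (by linarith) (hdist x hx y hy hxy)
    simpa [hXunit x hx, hXunit y hy] using abs_real_inner_le_norm x y
  have hcard : X.card = 2 * d := by
    refine le_antisymm ?_ hXcard
    by_contra hcon
    have hN : (2 * d + 1 : ℝ) ≤ X.card := by
      have : 2 * d + 1 ≤ X.card := by omega
      exact_mod_cast this
    have h := (cps_delsarte (by omega) (fun i => (X.equivFin.symm i : EuclideanSpace ℝ (Fin d)))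
      (fun i => hXunit _ (X.equivFin.symm i).2) (2*ε) (by linarith)
      (fun i j hij => hin _ (X.equivFin.symm i).2 _ (X.equivFin.symm j).2
        (fun h => hij (X.equivFin.symm.injective (Subtype.ext h))))).1
    set N : ℝ := (X.card : ℝ)
    rw [div_le_iff₀ (by linarith)] at h
    have h1 : N * N ≤ N * (2 * d + (N-1) * (((2*ε)^2 + 2*ε) * d)) := by nlinarith
    have h2 := le_of_mul_le_mul_left h1 (by linarith)
    have hc : (((2*ε)^2 + 2*ε) * d) * (2 * d) < 1 := by nlinarith [mul_nonneg hε0.le (sq_nonneg (d:ℝ))]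
    set c := (((2*ε)^2 + 2*ε) * d)
    have hc0 : 0 ≤ c := by positivity
    have hc1 : c < 1 := by nlinarith
    nlinarith [mul_le_mul_of_nonneg_right (by linarith : 2 * (d:ℝ) ≤ N - 1) (by linarith : 0 ≤ 1 - c)]
  refine ⟨hcard, ?_⟩
  let e := X.equivFinOfCardEq hcard
  let v : Fin (2*d) → EuclideanSpace ℝ (Fin d) := fun i => (e.symm i : EuclideanSpace ℝ (Fin d))
  have hvinj : Function.Injective v := fun i j h => e.symm.injective (Subtype.ext h)
  have hvX : ∀ i, v i ∈ X := fun i => (e.symm i).2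
  have hvs : ∀ x ∈ X, ∃ i, v i = x := fun x hx => ⟨e ⟨x, hx⟩, by simp [v]⟩
  have hv1 : ∀ i, ‖v i‖ = 1 := fun i => hXunit _ (hvX i)
  have hvv : ∀ i j, i ≠ j → ⟪v i, v j⟫ ≤ 2 * ε := fun i j hij =>
    hin _ (hvX i) _ (hvX j) (fun h => hij (hvinj h))
  have hdel := (cps_delsarte (by omega) v hv1 (2*ε) (by linarith) hvv).2
  set τ : ℝ := 9 * d^2 * ε with hτ
  have hτ0 : 0 ≤ τ := by positivity
  have hdich : ∀ i j, i ≠ j → |⟪v i, v j⟫| ≤ τ ∨ ⟪v i, v j⟫ ≤ -1 + τ := by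
    intro i j hij
    have h1 := hdel i j hij
    have h2 := hvv i j hij
    set t := ⟪v i, v j⟫
    push_cast at h1
    have h3 : (2 * (d:ℝ))^2/d = 2 * (2 * d) := by field_simp
    rw [h3] at h1
    have h4 : (2*ε)^2 + 2*ε ≤ 2.1 * ε := by nlinarith
    have h40 : 0 ≤ (2*ε)^2 + 2*ε := by positivity
    have h5 : -(t^2+t) ≤ 4.2 * d^2 * ε := by
      have : 2 * (d:ℝ) * (2 * d - 1) * ((2*ε)^2 + 2*ε) ≤ 4 * d^2 * (2.1 * ε) := by
        have : 2 * (d:ℝ) * (2 * d - 1) ≤ 4 * d^2 := by nlinarith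
        gcongr
      nlinarith
    rcases le_or_gt t (-1/2) with ht | ht
    · right; nlinarith
    · left
      rw [abs_le]
      constructor
      · by_cases h0 : 0 ≤ t
        · linarith
        · push Not at h0
          nlinarith
      · nlinarith
  obtain ⟨a, hai, haa, hat, hao⟩ := cps_match hd v hv1 τ hτ0 (by
    rw [hτ]; nlinarith) hdich
  obtain ⟨p, hp, hps⟩ := cps_half a hai haa
  obtain ⟨w, hw, hwa⟩ := cps_geom hd (fun i => v (p i)) (fun i => v (a (p i))) τ hτ0
    (by
      rw [hτ]
      have : (d:ℝ)^3 * 2 ≤ d^4 := by nlinarith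
      nlinarith)
    (fun i => hv1 _) (fun i => hv1 _)
    (fun i j hij => hao _ _ (hp i j hij).1.symm (hp j i hij.symm).2)
    (fun i j hij => hao _ _ (hp j i hij.symm).2 (by rw [haa]; exact (hp i j hij).1.symm))
    (fun i => hat _)
  let g : Fin (2*d) → Fin (2*d) := fun i =>
    if h : i.1 < d then p ⟨i.1, h⟩ else a (p ⟨i.1 - d, by have := i.2; omega⟩)
  have hgs : Function.Surjective g := by
    intro k
    obtain ⟨i, hi | hi⟩ := hps k
    · exact ⟨⟨i.1, by have := i.2; omega⟩, by simp [g, hi]⟩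
    · exact ⟨⟨i.1 + d, by have := i.2; omega⟩, by simp [g, hi]⟩
  have hgi : Function.Injective g := Finite.injective_iff_surjective.mpr hgs
  refine ⟨w, hw, fun i => v (g i), hvinj.comp hgi, fun i => hvX _, ?_, ?_⟩
  · intro x hx
    obtain ⟨k, rfl⟩ := hvs x hx
    obtain ⟨i, rfl⟩ := hgs k
    exact ⟨i, rfl⟩
  · intro i
    have hb : 10 * d * τ ≤ 96 * (d:ℝ)^3 * ε := by
      rw [hτ]
      have : 0 ≤ (d:ℝ)^3 * ε := by positivity
      nlinarith
    have g1 : g ⟨i.1, by have := i.2; omega⟩ = p i := by simp [g]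
    have g2 : g ⟨i.1 + d, by have := i.2; omega⟩ = a (p i) := by simp [g]
    simp only [g1, g2]
    exact ⟨(hwa i).1.trans hb, (hwa i).2.trans hb⟩
end

section
/- Let φ_I = (1/2)·arccos(1/√5), let 0 ≤ ε < 10⁻⁹, and let x_1, …, x_k be unit vectors in ℝ³ with k ≥ 12 such that the spherical distance δ(x_i, x_j) ≥ 2(φ_I − ε) for all i ≠ j. Then k = 12, and there exist unit vectors w_1, …, w_12 in ℝ³ forming the vertex set of a regular icosahedron inscribed in the unit sphere (i.e. for all i ≠ j, ⟨w_i, w_j⟩ ∈ {1/√5, −1/√5, −1}) such that δ(x_i, w_i) ≤ c·ε for all i, where c = 44⁹ · 25 · 10⁷. -/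
open scoped RealInnerProductSpace

namespace Ico

abbrev E3 := EuclideanSpace ℝ (Fin 3)

noncomputable def s : ℝ := 1 / Real.sqrt 5

lemma s_sq : s ^ 2 = 1 / 5 := by
  unfold s
  rw [div_pow, Real.sq_sqrt (by norm_num)]; norm_num

lemma s_pos : 0 < s := by unfold s; positivity

lemma s_lo : 0.447 < s := by
  have := s_sq
  have := s_pos
  nlinarith

lemma s_hi : s < 0.448 := by
  have := s_sq
  have := s_pos
  nlinarith

lemma inner3 (u v : E3) : ⟪u, v⟫ = u 0 * v 0 + u 1 * v 1 + u 2 * v 2 := by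
  simp [PiLp.inner_apply, Fin.sum_univ_three]; ring

lemma norm3 (u : E3) (h : ‖u‖ = 1) : u 0 ^ 2 + u 1 ^ 2 + u 2 ^ 2 = 1 := by
  have := real_inner_self_eq_norm_sq u
  rw [inner3, h] at this
  linarith

/-- The Delsarte polynomial. -/
noncomputable def f (t : ℝ) : ℝ := (t + 1) * (t + s) ^ 2 * (t - s)

lemma ker_nonneg {k n : ℕ} (c : Fin n → ℝ) (hc : ∀ m, 0 ≤ c m) (H : Fin n → Fin k → ℝ)
    (K : Fin k → Fin k → ℝ) (hK : ∀ i j, K i j = ∑ m, c m * (H m i * H m j)) :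
    0 ≤ ∑ i, ∑ j, K i j := by
  have : ∑ i, ∑ j, K i j = ∑ m, c m * (∑ i, H m i) ^ 2 := by
    simp_rw [hK, sq, Finset.sum_mul_sum, Finset.mul_sum]
    rw [Finset.sum_congr rfl (fun i _ => Finset.sum_comm), Finset.sum_comm]
  rw [this]
  exact Finset.sum_nonneg fun m _ => mul_nonneg (hc m) (sq_nonneg _)

lemma leg1 {k : ℕ} (x : Fin k → E3) : 0 ≤ ∑ i, ∑ j, ⟪x i, x j⟫ := by
  refine ker_nonneg (fun _ : Fin 3 => 1) (fun _ => zero_le_one) (fun m i => x i m) _ ?_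
  intro i j
  rw [inner3, Fin.sum_univ_three]; ring

lemma leg2 {k : ℕ} (x : Fin k → E3) (hx : ∀ i, ‖x i‖ = 1) :
    0 ≤ ∑ i, ∑ j, (3 * ⟪x i, x j⟫ ^ 2 - 1) / 2 := by
  refine ker_nonneg ![3, 3, 3, 1/4, 3/4] (fun m => by fin_cases m <;> norm_num)
    ![fun i => x i 0 * x i 1, fun i => x i 0 * x i 2, fun i => x i 1 * x i 2,
      fun i => 3 * x i 2 ^ 2 - (x i 0 ^ 2 + x i 1 ^ 2 + x i 2 ^ 2),
      fun i => x i 0 ^ 2 - x i 1 ^ 2] _ ?_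
  intro i j
  have h1 := norm3 _ (hx i)
  have h2 := norm3 _ (hx j)
  have : (3 * ⟪x i, x j⟫ ^ 2 - 1) / 2 = (3 * ⟪x i, x j⟫ ^ 2 -
    (x i 0 ^ 2 + x i 1 ^ 2 + x i 2 ^ 2) * (x j 0 ^ 2 + x j 1 ^ 2 + x j 2 ^ 2)) / 2 := by
    rw [h1, h2]; ring
  rw [this, inner3]
  simp [Fin.sum_univ_succ]
  ring

lemma leg3 {k : ℕ} (x : Fin k → E3) (hx : ∀ i, ‖x i‖ = 1) :
    0 ≤ ∑ i, ∑ j, (5 * ⟪x i, x j⟫ ^ 3 - 3 * ⟪x i, x j⟫) / 2 := by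
  refine ker_nonneg ![1/4, 3/8, 3/8, 15, 15/4, 5/8, 5/8] (fun m => by fin_cases m <;> norm_num)
    ![fun i => x i 2 * (2 * x i 2 ^ 2 - 3 * x i 0 ^ 2 - 3 * x i 1 ^ 2),
      fun i => x i 0 * (4 * x i 2 ^ 2 - x i 0 ^ 2 - x i 1 ^ 2),
      fun i => x i 1 * (4 * x i 2 ^ 2 - x i 0 ^ 2 - x i 1 ^ 2),
      fun i => x i 0 * x i 1 * x i 2,
      fun i => x i 2 * (x i 0 ^ 2 - x i 1 ^ 2),
      fun i => x i 0 * (x i 0 ^ 2 - 3 * x i 1 ^ 2),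
      fun i => x i 1 * (3 * x i 0 ^ 2 - x i 1 ^ 2)] _ ?_
  intro i j
  have h1 := norm3 _ (hx i)
  have h2 := norm3 _ (hx j)
  have : (5 * ⟪x i, x j⟫ ^ 3 - 3 * ⟪x i, x j⟫) / 2 = (5 * ⟪x i, x j⟫ ^ 3 - 3 * ⟪x i, x j⟫ *
    ((x i 0 ^ 2 + x i 1 ^ 2 + x i 2 ^ 2) * (x j 0 ^ 2 + x j 1 ^ 2 + x j 2 ^ 2))) / 2 := by
    rw [h1, h2]; ring
  rw [this, inner3]
  simp [Fin.sum_univ_succ]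
  ring

lemma leg4 {k : ℕ} (x : Fin k → E3) (hx : ∀ i, ‖x i‖ = 1) :
    0 ≤ ∑ i, ∑ j, (35 * ⟪x i, x j⟫ ^ 4 - 30 * ⟪x i, x j⟫ ^ 2 + 3) / 8 := by
  refine ker_nonneg ![1/64, 5/8, 5/8, 5/4, 5/16, 35/8, 35/8, 35/4, 35/64]
    (fun m => by fin_cases m <;> norm_num)
    ![fun i => 35 * x i 2 ^ 4 - 30 * x i 2 ^ 2 * (x i 0 ^ 2 + x i 1 ^ 2 + x i 2 ^ 2) +
        3 * (x i 0 ^ 2 + x i 1 ^ 2 + x i 2 ^ 2) ^ 2,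
      fun i => x i 0 * x i 2 * (4 * x i 2 ^ 2 - 3 * x i 0 ^ 2 - 3 * x i 1 ^ 2),
      fun i => x i 1 * x i 2 * (4 * x i 2 ^ 2 - 3 * x i 0 ^ 2 - 3 * x i 1 ^ 2),
      fun i => x i 0 * x i 1 * (6 * x i 2 ^ 2 - x i 0 ^ 2 - x i 1 ^ 2),
      fun i => (x i 0 ^ 2 - x i 1 ^ 2) * (6 * x i 2 ^ 2 - x i 0 ^ 2 - x i 1 ^ 2),
      fun i => x i 0 * x i 2 * (x i 0 ^ 2 - 3 * x i 1 ^ 2),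
      fun i => x i 1 * x i 2 * (3 * x i 0 ^ 2 - x i 1 ^ 2),
      fun i => x i 0 * x i 1 * (x i 0 ^ 2 - x i 1 ^ 2),
      fun i => x i 0 ^ 4 - 6 * x i 0 ^ 2 * x i 1 ^ 2 + x i 1 ^ 4] _ ?_
  intro i j
  have h1 := norm3 _ (hx i)
  have h2 := norm3 _ (hx j)
  have : (35 * ⟪x i, x j⟫ ^ 4 - 30 * ⟪x i, x j⟫ ^ 2 + 3) / 8 =
    (35 * ⟪x i, x j⟫ ^ 4 - 30 * ⟪x i, x j⟫ ^ 2 *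
    ((x i 0 ^ 2 + x i 1 ^ 2 + x i 2 ^ 2) * (x j 0 ^ 2 + x j 1 ^ 2 + x j 2 ^ 2)) + 3 *
    ((x i 0 ^ 2 + x i 1 ^ 2 + x i 2 ^ 2) * (x j 0 ^ 2 + x j 1 ^ 2 + x j 2 ^ 2)) ^ 2) / 8 := by
    rw [h1, h2]; ring
  rw [this, inner3]
  simp [Fin.sum_univ_succ]
  ring

lemma f_expand (t : ℝ) : f t = 2 / 15 * (1 + s) + 2 / 5 * (1 + s) * t +
    (4 / 7 + 2 / 3 * (s - 1 / 5)) * ((3 * t ^ 2 - 1) / 2) +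
    2 / 5 * (1 + s) * ((5 * t ^ 3 - 3 * t) / 2) +
    8 / 35 * ((35 * t ^ 4 - 30 * t ^ 2 + 3) / 8) := by
  have h := s_sq
  unfold f
  linear_combination (-(t + 1) * (t + s)) * h

lemma delsarte {k : ℕ} (x : Fin k → E3) (hx : ∀ i, ‖x i‖ = 1) :
    2 / 15 * (1 + s) * (k : ℝ) ^ 2 ≤ ∑ i, ∑ j, f ⟪x i, x j⟫ := by
  have h1 := leg1 x
  have h2 := leg2 x hx
  have h3 := leg3 x hx
  have h4 := leg4 x hx
  have hs := s_lo
  have e : ∑ i, ∑ j, f ⟪x i, x j⟫ = 2 / 15 * (1 + s) * (k : ℝ) ^ 2 +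
    2 / 5 * (1 + s) * (∑ i, ∑ j, ⟪x i, x j⟫) +
    (4 / 7 + 2 / 3 * (s - 1 / 5)) * (∑ i, ∑ j, (3 * ⟪x i, x j⟫ ^ 2 - 1) / 2) +
    2 / 5 * (1 + s) * (∑ i, ∑ j, (5 * ⟪x i, x j⟫ ^ 3 - 3 * ⟪x i, x j⟫) / 2) +
    8 / 35 * (∑ i, ∑ j, (35 * ⟪x i, x j⟫ ^ 4 - 30 * ⟪x i, x j⟫ ^ 2 + 3) / 8) := by
    simp_rw [f_expand, Finset.sum_add_distrib, ← Finset.mul_sum]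
    simp
    ring
  rw [e]
  have a1 := mul_nonneg (by linarith : 0 ≤ 2 / 5 * (1 + s)) h1
  have a2 := mul_nonneg (by linarith : 0 ≤ (4 / 7 + 2 / 3 * (s - 1 / 5))) h2
  have a3 := mul_nonneg (by linarith : 0 ≤ 2 / 5 * (1 + s)) h3
  linarith

lemma inner_le_of_dist {t ε : ℝ} (ht1 : -1 ≤ t) (ht2 : t ≤ 1) (h0 : 0 ≤ ε) (h1 : ε < 1 / 10 ^ 9)
    (h : 2 * (Real.arccos (1 / Real.sqrt 5) / 2 - ε) ≤ Real.arccos t) : t ≤ s + 2 * ε := by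
  change 2 * (Real.arccos s / 2 - ε) ≤ Real.arccos t at h
  have hs := s_lo
  have hs2 := s_hi
  have hc : Real.cos (Real.arccos s) = s := Real.cos_arccos (by linarith) (by linarith)
  have ha0 := Real.arccos_nonneg s
  have hlip : ∀ a b : ℝ, |Real.cos a - Real.cos b| ≤ |a - b| := by
    intro a b
    exact Real.abs_cos_sub_cos_le a b
  have ha : 1 / 2 ≤ Real.arccos s := by
    have := hlip 0 (Real.arccos s)
    rw [hc, Real.cos_zero, zero_sub, abs_neg, abs_of_nonneg ha0] at this
    have := le_abs_self (1 - s)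
    linarith
  have h2 : Real.cos (Real.arccos t) ≤ Real.cos (Real.arccos s - 2 * ε) := by
    apply Real.cos_le_cos_of_nonneg_of_le_pi
    · norm_num at h1; linarith
    · exact Real.arccos_le_pi t
    · linarith
  rw [Real.cos_arccos ht1 ht2] at h2
  have h3 := hlip (Real.arccos s - 2 * ε) (Real.arccos s)
  rw [hc] at h3
  have h4 : |Real.arccos s - 2 * ε - Real.arccos s| = 2 * ε := by
    rw [show Real.arccos s - 2 * ε - Real.arccos s = -(2 * ε) by ring, abs_neg,
      abs_of_nonneg (by linarith)]
  have := le_abs_self (Real.cos (Real.arccos s - 2 * ε) - s)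
  linarith

end Ico

namespace Ico

lemma abs_mul_sub {a b a' b' p q : ℝ} (ha : |a| ≤ 1) (hb : |b'| ≤ 1)
    (h1 : |a - a'| ≤ p) (h2 : |b - b'| ≤ q) : |a * b - a' * b'| ≤ p + q := by
  have : a * b - a' * b' = a * (b - b') + (a - a') * b' := by ring
  rw [this]
  refine (abs_add_le _ _).trans ?_
  rw [abs_mul, abs_mul]
  have := abs_nonneg (b - b')
  have := abs_nonneg (a - a')
  nlinarith [abs_nonneg a, abs_nonneg b']

lemma abs_mul_le_one {a b : ℝ} (ha : |a| ≤ 1) (hb : |b| ≤ 1) : |a * b| ≤ 1 := by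
  rw [abs_mul]; exact mul_le_one₀ ha (abs_nonneg _) hb

lemma det_diff (A B : Matrix (Fin 4) (Fin 4) ℝ) (η : ℝ) (hA : ∀ i j, |A i j| ≤ 1)
    (hB : ∀ i j, |B i j| ≤ 1) (h : ∀ i j, |A i j - B i j| ≤ η) :
    |A.det - B.det| ≤ 96 * η := by
  rw [Matrix.det_apply, Matrix.det_apply, ← Finset.sum_sub_distrib]
  have : ∀ σ ∈ (Finset.univ : Finset (Equiv.Perm (Fin 4))),
      |Equiv.Perm.sign σ • ∏ i, A (σ i) i - Equiv.Perm.sign σ • ∏ i, B (σ i) i| ≤ 4 * η := by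
    intro σ _
    rw [← smul_sub]
    have e : ∀ z : ℝ, |Equiv.Perm.sign σ • z| = |z| := by
      intro z
      rcases Int.units_eq_one_or (Equiv.Perm.sign σ) with h | h <;> simp [h, Units.smul_def]
    rw [e, Fin.prod_univ_four, Fin.prod_univ_four]
    have h2 := abs_mul_sub (hA (σ 0) 0) (hB (σ 1) 1) (h (σ 0) 0) (h (σ 1) 1)
    have h3 := abs_mul_sub (abs_mul_le_one (hA (σ 0) 0) (hA (σ 1) 1)) (hB (σ 2) 2) h2 (h (σ 2) 2)
    have h4 := abs_mul_sub (abs_mul_le_one (abs_mul_le_one (hA (σ 0) 0) (hA (σ 1) 1))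
      (hA (σ 2) 2)) (hB (σ 3) 3) h3 (h (σ 3) 3)
    linarith
  refine (Finset.abs_sum_le_sum_abs _ _).trans ((Finset.sum_le_card_nsmul _ _ _ this).trans ?_)
  rw [Finset.card_univ, Fintype.card_perm, Fintype.card_fin]
  simp [Nat.factorial]
  linarith

open Zsqrtd in
lemma det_exact (A B : Matrix (Fin 4) (Fin 4) ℝ) (hA0 : A.det = 0) (hA : ∀ i j, |A i j| ≤ 1)
    (hB : ∀ i j, B i j = 1 ∨ B i j = s ∨ B i j = -s ∨ B i j = -1)
    (h : ∀ i j, |A i j - B i j| ≤ 2 / 10 ^ 9) : B.det = 0 := by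
  have hs1 := s_lo
  have hs2 := s_hi
  have hB1 : ∀ i j, |B i j| ≤ 1 := by
    intro i j
    rw [abs_le]
    rcases hB i j with e | e | e | e <;> rw [e] <;> constructor <;> linarith
  have hd := det_diff A B _ hA hB1 h
  rw [hA0, zero_sub, abs_neg] at hd
  have h5 : (0 : ℤ) ≤ 5 := by norm_num
  have hr : ∀ z : ℤ√5, toReal h5 z = z.re + z.im * √5 := fun z => by
    simp [toReal, lift]
  have hr5 : √5 * √5 = (5 : ℝ) := Real.mul_self_sqrt (by norm_num)
  have hr5n : 0 ≤ √(5 : ℝ) := Real.sqrt_nonneg _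
  have hr5s : √(5 : ℝ) * s = 1 := by unfold s; field_simp
  have hP : ∀ i j, ∃ z : ℤ√5, toReal h5 z = √5 * B i j ∧ |toReal h5 (star z)| ≤ √5 := by
    have hge : 1 ≤ √(5 : ℝ) := by nlinarith
    intro i j
    rcases hB i j with e | e | e | e <;> rw [e]
    · refine ⟨⟨0, 1⟩, ?_, ?_⟩
      · rw [hr]; simp
      · rw [hr]; simp [abs_of_nonneg hr5n]
    · refine ⟨⟨1, 0⟩, ?_, ?_⟩
      · rw [hr, hr5s]; simp
      · rw [hr]; simp
    · refine ⟨⟨-1, 0⟩, ?_, ?_⟩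
      · rw [hr, mul_neg, hr5s]; simp
      · rw [hr]; simp
    · refine ⟨⟨0, -1⟩, ?_, ?_⟩
      · rw [hr]; simp
      · rw [hr]; simp [abs_of_nonneg hr5n]
  choose P hP1 hP2 using hP
  set M : Matrix (Fin 4) (Fin 4) (ℤ√5) := Matrix.of P with hM
  have e1 : toReal h5 M.det = 25 * B.det := by
    rw [RingHom.map_det]
    have : (toReal h5).mapMatrix M = √5 • B := by
      ext i j; simp [hM, hP1]
    rw [this, Matrix.det_smul, Fintype.card_fin,
      show √(5:ℝ) ^ 4 = (√5 * √5) * (√5 * √5) by ring, hr5]; norm_num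
  have e2 : |toReal h5 (star M.det)| ≤ 600 := by
    have e3 : star M.det = ((starRingEnd (ℤ√5)).mapMatrix M).det := by
      rw [← RingHom.map_det]; rfl
    rw [e3, RingHom.map_det]
    have := Matrix.det_le (abv := AbsoluteValue.abs) (x := √(5:ℝ))
      (A := (toReal h5).mapMatrix ((starRingEnd (ℤ√5)).mapMatrix M)) (by
        intro i j
        exact hP2 i j)
    rw [Fintype.card_fin, show √(5:ℝ) ^ 4 = (√5 * √5) * (√5 * √5) by ring, hr5] at this
    refine this.trans ?_
    simp [Nat.factorial]; norm_num
  have e4 : ((M.det.norm : ℤ) : ℝ) = 25 * B.det * toReal h5 (star M.det) := by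
    rw [← e1, ← map_mul, ← norm_eq_mul_conj]; simp
  have e5 : |((M.det.norm : ℤ) : ℝ)| < 1 := by
    rw [e4, abs_mul, abs_mul]
    have : |(25:ℝ)| = 25 := by norm_num
    rw [this]
    calc _ ≤ 25 * (96 * (2 / 10 ^ 9)) * (600 : ℝ) := by gcongr
      _ < 1 := by norm_num
  have e6 : M.det.norm = 0 := by
    rw [← Int.cast_abs] at e5
    have : |M.det.norm| < 1 := by exact_mod_cast e5
    exact Int.abs_lt_one_iff.mp this
  have e7 : M.det = 0 := (norm_eq_zero (by
    intro n hn
    have : n ≤ 2 := by nlinarith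
    have : -2 ≤ n := by nlinarith
    interval_cases n <;> omega) _).mp e6
  rw [e7, map_zero] at e1
  linarith

lemma det_inner_zero (u v : Fin 4 → E3) : (Matrix.of fun a b => ⟪u a, v b⟫).det = 0 := by
  have : (Matrix.of fun a b => (⟪u a, v b⟫ : ℝ)) =
    (Matrix.of fun a m => (![u a 0, u a 1, u a 2, 0] : Fin 4 → ℝ) m) *
    (Matrix.of fun m b => (![v b 0, v b 1, v b 2, 0] : Fin 4 → ℝ) m) := by
    ext a b
    simp [Matrix.mul_apply, Fin.sum_univ_four, inner3]
  rw [this, Matrix.det_mul, Matrix.det_eq_zero_of_column_eq_zero 3 (by intro i; simp), zero_mul]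

lemma det4 (A : Matrix (Fin 4) (Fin 4) ℝ) : A.det =
    A 0 0 * (A 1 1 * (A 2 2 * A 3 3 - A 2 3 * A 3 2) - A 1 2 * (A 2 1 * A 3 3 - A 2 3 * A 3 1)
      + A 1 3 * (A 2 1 * A 3 2 - A 2 2 * A 3 1))
    - A 0 1 * (A 1 0 * (A 2 2 * A 3 3 - A 2 3 * A 3 2) - A 1 2 * (A 2 0 * A 3 3 - A 2 3 * A 3 0)
      + A 1 3 * (A 2 0 * A 3 2 - A 2 2 * A 3 0))
    + A 0 2 * (A 1 0 * (A 2 1 * A 3 3 - A 2 3 * A 3 1) - A 1 1 * (A 2 0 * A 3 3 - A 2 3 * A 3 0)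
      + A 1 3 * (A 2 0 * A 3 1 - A 2 1 * A 3 0))
    - A 0 3 * (A 1 0 * (A 2 1 * A 3 2 - A 2 2 * A 3 1) - A 1 1 * (A 2 0 * A 3 2 - A 2 2 * A 3 0)
      + A 1 2 * (A 2 0 * A 3 1 - A 2 1 * A 3 0)) := by
  simp [Matrix.det_succ_row_zero, Fin.sum_univ_succ, Fin.succAbove]
  ring

lemma classify {t ε : ℝ} (h0 : 0 ≤ ε) (h1 : ε < 1 / 10 ^ 22) (ht1 : -1 ≤ t)
    (ht3 : t ≤ s + 2 * ε) (hf : -(2200 * ε) ≤ f t) :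
    (0.1 ≤ t ∧ |t - s| ≤ 9000 * ε) ∨ (t ≤ -0.7 ∧ |t - (-1)| ≤ 40000 * ε) ∨
    (-0.7 < t ∧ t < 0.1 ∧ |t - (-s)| ≤ 2 / 10 ^ 9) := by
  have hs1 := s_lo
  have hs2 := s_hi
  norm_num at h1
  unfold f at hf
  by_cases c1 : 0.1 ≤ t
  · left
    refine ⟨c1, ?_⟩
    rw [abs_le]
    refine ⟨?_, by linarith⟩
    by_contra hc
    push Not at hc
    have k1 : 0.25 ≤ (t + 1) * (t + s) ^ 2 := by nlinarith
    nlinarith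
  · by_cases c2 : t ≤ -0.7
    · right; left
      refine ⟨c2, ?_⟩
      rw [abs_le]
      refine ⟨by linarith, ?_⟩
      have k1 : 0.06 ≤ (t + s) ^ 2 := by nlinarith
      have k2 : 0.06 ≤ (t + s) ^ 2 * (s - t) := by nlinarith
      have k3 : (t + 1) * 0.06 ≤ (t + 1) * ((t + s) ^ 2 * (s - t)) :=
        mul_le_mul_of_nonneg_left k2 (by linarith)
      linarith
    · right; right
      push Not at c1 c2
      refine ⟨c2, c1, ?_⟩
      have k1 : 0.1 ≤ (t + 1) * (s - t) := by nlinarith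
      have k2 : (t + s) ^ 2 * 0.1 ≤ (t + s) ^ 2 * ((t + 1) * (s - t)) :=
        mul_le_mul_of_nonneg_left k1 (sq_nonneg _)
      have k3 : (t + s) ^ 2 ≤ 22000 * ε := by linarith
      apply abs_le_of_sq_le_sq _ (by norm_num)
      rw [sub_neg_eq_add]
      norm_num
      linarith
end Ico

namespace Ico

/-- An idealized Gram matrix: entries in the icosahedral set, and rank at most three. -/
structure Ideal12 (g : Fin 12 → Fin 12 → ℝ) : Prop where
  symm : ∀ i j, g i j = g j i
  diag : ∀ i, g i i = 1
  off : ∀ i j, i ≠ j → g i j = s ∨ g i j = -s ∨ g i j = -1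
  det0 : ∀ r c : Fin 4 → Fin 12, (Matrix.of fun a b => g (r a) (c b)).det = 0
  anti : ∀ i j k, g i j = -1 → g i k = -1 → j = k

namespace Ideal12
variable {g : Fin 12 → Fin 12 → ℝ}

lemma gram4 (h : Ideal12 g) (i j k l : Fin 12) :
    1 - (g i j ^ 2 + g i k ^ 2 + g i l ^ 2 + g j k ^ 2 + g j l ^ 2 + g k l ^ 2)
    + 2 * (g i j * g i k * g j k + g i j * g i l * g j l + g i k * g i l * g k l
      + g j k * g j l * g k l)
    + g i j ^ 2 * g k l ^ 2 + g i k ^ 2 * g j l ^ 2 + g i l ^ 2 * g j k ^ 2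
    - 2 * (g i j * g i k * g j l * g k l + g i j * g i l * g j k * g k l
      + g i k * g i l * g j k * g j l) = 0 := by
  have := h.det0 ![i, j, k, l] ![i, j, k, l]
  rw [det4] at this
  simp [h.diag] at this
  rw [h.symm j i, h.symm k i, h.symm l i, h.symm k j, h.symm l j, h.symm l k] at this
  linarith

lemma base (h : Ideal12 g) : ∃ a b c, (g a b = s ∨ g a b = -s) ∧ (g a c = s ∨ g a c = -s) ∧
    (g b c = s ∨ g b c = -s) := by
  have key : ∀ i j, i ≠ j → g i j ≠ -1 → (g i j = s ∨ g i j = -s) := by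
    intro i j hij h1
    rcases h.off i j hij with e | e | e
    · exact Or.inl e
    · exact Or.inr e
    · exact absurd e h1
  obtain ⟨b, hb, hb1⟩ : ∃ b : Fin 12, (b = 1 ∨ b = 2) ∧ g 0 b ≠ -1 := by
    by_contra hc
    push Not at hc
    have := h.anti 0 1 2 (hc 1 (by simp)) (hc 2 (by simp))
    revert this; decide
  obtain ⟨c, hc, hc1, hc2⟩ : ∃ c : Fin 12, (c = 3 ∨ c = 4 ∨ c = 5) ∧ g 0 c ≠ -1 ∧
      g b c ≠ -1 := by
    by_contra hc
    push Not at hc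
    have h3 := hc 3 (by simp)
    have h4 := hc 4 (by simp)
    have h5 := hc 5 (by simp)
    have n1 : (3 : Fin 12) ≠ 4 := by decide
    have n2 : (3 : Fin 12) ≠ 5 := by decide
    have n3 : (4 : Fin 12) ≠ 5 := by decide
    have a1 := fun i => h.anti i 3 4
    have a2 := fun i => h.anti i 3 5
    have a3 := fun i => h.anti i 4 5
    by_cases e3 : g 0 3 = -1
    · have e4 := h4 (fun e => n1 (a1 _ e3 e))
      have e5 := h5 (fun e => n2 (a2 _ e3 e))
      exact n3 (a3 _ e4 e5)
    · have f3 := h3 e3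
      by_cases e4 : g 0 4 = -1
      · have e5 := h5 (fun e => n3 (a3 _ e4 e))
        exact n2 (a2 _ f3 e5)
      · exact n1 (a1 _ f3 (h4 e4))
  refine ⟨0, b, c, key _ _ ?_ hb1, key _ _ ?_ hc1, key _ _ ?_ hc2⟩
  · rcases hb with rfl | rfl <;> decide
  · rcases hc with rfl | rfl | rfl <;> decide
  · rcases hb with rfl | rfl <;> rcases hc with rfl | rfl | rfl <;> decide

lemma factor (h : Ideal12 g) : ∃ (a b c : Fin 12) (W : Fin 12 → Fin 3 → ℝ),
    W a 0 = 1 ∧ W a 1 = 0 ∧ W a 2 = 0 ∧ W b 2 = 0 ∧ 0.8 ≤ W b 1 ∧ 0.5 ≤ W c 2 ∧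
    ∀ i j, g i j = W i 0 * W j 0 + W i 1 * W j 1 + W i 2 * W j 2 := by
  obtain ⟨a, b, c, hab, hac, hbc⟩ := h.base
  have hs1 := s_lo
  have hs2 := s_hi
  have hsq := s_sq
  have sq : ∀ {y : ℝ}, (y = s ∨ y = -s) → y ^ 2 = 1 / 5 := by
    rintro y (rfl | rfl)
    · exact hsq
    · rw [neg_sq]; exact hsq
  have hab2 := sq hab
  have hac2 := sq hac
  have hbc2 := sq hbc
  obtain ⟨β, hβ0, hβ⟩ : ∃ β : ℝ, 0 < β ∧ β ^ 2 = 1 - g a b ^ 2 :=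
    ⟨√(1 - g a b ^ 2), Real.sqrt_pos.mpr (by rw [hab2]; norm_num),
      Real.sq_sqrt (by rw [hab2]; norm_num)⟩
  obtain ⟨γ, hγ⟩ : ∃ γ : ℝ, β * γ = g b c - g a b * g a c :=
    ⟨(g b c - g a b * g a c) / β, by field_simp⟩
  have hβ2 : β ^ 2 = 4 / 5 := by rw [hβ, hab2]; norm_num
  have hγ2 : γ ^ 2 ≤ 0.55 := by
    have e : β ^ 2 * γ ^ 2 = (g b c - g a b * g a c) ^ 2 := by rw [← hγ]; ring
    have e2 : (g b c - g a b * g a c) ^ 2 ≤ 0.44 := by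
      rcases hab with e1 | e1 <;> rcases hac with e2 | e2 <;> rcases hbc with e3 | e3 <;>
        rw [e1, e2, e3] <;> nlinarith
    rw [hβ2] at e
    linarith
  obtain ⟨ρ, hρ0, hρ⟩ : ∃ ρ : ℝ, 0 < ρ ∧ ρ ^ 2 = 1 - g a c ^ 2 - γ ^ 2 :=
    ⟨√(1 - g a c ^ 2 - γ ^ 2), Real.sqrt_pos.mpr (by rw [hac2]; linarith),
      Real.sq_sqrt (by rw [hac2]; linarith)⟩
  have hq : ∀ i, ∃ q, β * q = g i b - g i a * g a b := fun i =>
    ⟨(g i b - g i a * g a b) / β, by field_simp⟩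
  choose q hq using hq
  have hr : ∀ i, ∃ r, ρ * r = g i c - g i a * g a c - q i * γ := fun i =>
    ⟨(g i c - g i a * g a c - q i * γ) / ρ, by field_simp⟩
  choose r hr using hr
  have qa : q a = 0 := by
    have := hq a
    rw [h.diag] at this
    have : β * q a = 0 := by linarith
    exact (mul_eq_zero.mp this).resolve_left hβ0.ne'
  have qb : q b = β := by
    have := hq b
    rw [h.diag, h.symm b a] at this
    have : β * q b = β * β := by linarith
    exact mul_left_cancel₀ hβ0.ne' this
  have qc : q c = γ := by
    have := hq c
    rw [h.symm c b, h.symm c a] at this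
    have : β * q c = β * γ := by linarith
    exact mul_left_cancel₀ hβ0.ne' this
  have ra : r a = 0 := by
    have := hr a
    rw [h.diag, qa] at this
    have : ρ * r a = 0 := by linarith
    exact (mul_eq_zero.mp this).resolve_left hρ0.ne'
  have rb : r b = 0 := by
    have := hr b
    rw [h.symm b a, qb] at this
    have : ρ * r b = 0 := by linarith
    exact (mul_eq_zero.mp this).resolve_left hρ0.ne'
  have rc : r c = ρ := by
    have := hr c
    rw [h.diag, h.symm c a, qc] at this
    have : ρ * r c = ρ * ρ := by linarith
    exact mul_left_cancel₀ hρ0.ne' this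
  refine ⟨a, b, c, fun i => ![g i a, q i, r i], ?_, ?_, ?_, ?_, ?_, ?_, ?_⟩
  · simp [h.diag]
  · simp [qa]
  · simp [ra]
  · simp [rb]
  · simp only [Matrix.cons_val, qb]; nlinarith
  · simp only [Matrix.cons_val, rc]; nlinarith
  · intro i j
    simp only [Matrix.cons_val]
    have hd := h.det0 ![a, b, c, i] ![a, b, c, j]
    rw [det4] at hd
    simp only [Matrix.of_apply, Matrix.cons_val] at hd
    have ib : g i b = β * q i + g i a * g a b := by linarith [hq i]
    have jb : g j b = β * q j + g j a * g a b := by linarith [hq j]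
    have ic : g i c = ρ * r i + g i a * g a c + q i * γ := by linarith [hr i]
    have jc : g j c = ρ * r j + g j a * g a c + q j * γ := by linarith [hr j]
    have bb : g b b = β ^ 2 + g a b ^ 2 := by rw [h.diag]; linarith
    have cc : g c c = ρ ^ 2 + g a c ^ 2 + γ ^ 2 := by rw [h.diag]; linarith
    have bc : g b c = β * γ + g a b * g a c := by linarith
    rw [h.symm b a, h.symm c a, h.symm c b, h.symm a j, h.symm b j, h.symm c j,
      ib, jb, ic, jc, bb, cc, bc, h.diag a] at hd
    have e : β ^ 2 * ρ ^ 2 * (g i j - (g i a * g j a + q i * q j + r i * r j)) = 0 := by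
      rw [← hd]; ring
    have hne : β ^ 2 * ρ ^ 2 ≠ 0 := by positivity
    have := (mul_eq_zero.mp e).resolve_left hne
    linarith

lemma opp (h : Ideal12 g) {i j : Fin 12} (hij : g i j = -1) (k : Fin 12) : g i k = -g j k := by
  obtain ⟨a, b, c, W, -, -, -, -, -, -, hW⟩ := h.factor
  have hi := h.diag i
  have hj := h.diag j
  rw [hW] at hij hi hj
  have e : (W i 0 + W j 0) ^ 2 + (W i 1 + W j 1) ^ 2 + (W i 2 + W j 2) ^ 2 = 0 := by
    linear_combination hi + hj + 2 * hij
  have e0 : W i 0 + W j 0 = 0 := by nlinarith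
  have e1 : W i 1 + W j 1 = 0 := by nlinarith
  have e2 : W i 2 + W j 2 = 0 := by nlinarith
  rw [hW, hW]
  linear_combination W k 0 * e0 + W k 1 * e1 + W k 2 * e2

lemma same_class (h : Ideal12 g) {c d p q : Fin 12} {α : ℝ} (hα : α = s ∨ α = -s)
    (hcd : g c d = -s) (hpq : p ≠ q) (h1 : g c p = α) (h2 : g c q = α) (h3 : g d p = α)
    (h4 : g d q = α) : g p q = s := by
  have hs1 := s_lo
  have hs2 := s_hi
  have p2 := s_sq
  have p3 : s ^ 3 = s / 5 := by rw [pow_succ, p2]; ring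
  have p4 : s ^ 4 = 1 / 25 := by rw [show s ^ 4 = (s ^ 2) ^ 2 by ring, p2]; norm_num
  have hg := h.gram4 c d p q
  rcases h.off p q hpq with e | e | e
  · exact e
  all_goals
    exfalso
    rw [hcd, h1, h2, h3, h4, e] at hg
    rcases hα with rfl | rfl <;> ring_nf at hg <;> linarith

lemma diff_class (h : Ideal12 g) {c d p q : Fin 12} {α : ℝ} (hα : α = s ∨ α = -s)
    (hcd : g c d = -s) (hpq : p ≠ q) (h1 : g c p = α) (h2 : g c q = α) (h3 : g d p = -α)
    (h4 : g d q = -α) : g p q = -s := by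
  have hs1 := s_lo
  have hs2 := s_hi
  have p2 := s_sq
  have p3 : s ^ 3 = s / 5 := by rw [pow_succ, p2]; ring
  have p4 : s ^ 4 = 1 / 25 := by rw [show s ^ 4 = (s ^ 2) ^ 2 by ring, p2]; norm_num
  have hg := h.gram4 c d p q
  rcases h.off p q hpq with e | e | e
  swap
  · exact e
  all_goals
    exfalso
    rw [hcd, h1, h2, h3, h4, e] at hg
    rcases hα with rfl | rfl <;> ring_nf at hg <;> linarith

lemma triple (h : Ideal12 g) {c p q r : Fin 12} {α y : ℝ} (hα : α = s ∨ α = -s)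
    (hy : y = s ∨ y = -s)
    (h1 : g c p = α) (h2 : g c q = α) (h3 : g c r = α) (h4 : g p q = y) (h5 : g p r = y)
    (h6 : g q r = y) : False := by
  have hs1 := s_lo
  have hs2 := s_hi
  have p2 := s_sq
  have p3 : s ^ 3 = s / 5 := by rw [pow_succ, p2]; ring
  have p4 : s ^ 4 = 1 / 25 := by rw [show s ^ 4 = (s ^ 2) ^ 2 by ring, p2]; norm_num
  have hg := h.gram4 c p q r
  rw [h1, h2, h3, h4, h5, h6] at hg
  rcases hα with rfl | rfl <;> rcases hy with rfl | rfl <;> ring_nf at hg <;> linarith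

open Classical in
/-- Every pair of type `-s` has two adjacent common neighbours. -/
lemma rhombus (h : Ideal12 g) {c d : Fin 12} (hcd : g c d = -s) :
    ∃ a b, g c a = s ∧ g c b = s ∧ g d a = s ∧ g d b = s ∧ g a b = s := by
  set S : ℝ → ℝ → Finset (Fin 12) := fun α β =>
    Finset.univ.filter (fun j => g c j = α ∧ g d j = β) with hS
  have same2 : ∀ α, (α = s ∨ α = -s) → (S α α).card ≤ 2 := by
    intro α hα
    by_contra hc
    push Not at hc
    obtain ⟨p, hp, q, hq, r, hr, hpq, hpr, hqr⟩ := Finset.two_lt_card.mp hc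
    simp only [hS, Finset.mem_filter, Finset.mem_univ, true_and] at hp hq hr
    exact h.triple hα (Or.inl rfl) hp.1 hq.1 hr.1
      (h.same_class hα hcd hpq hp.1 hq.1 hp.2 hq.2)
      (h.same_class hα hcd hpr hp.1 hr.1 hp.2 hr.2)
      (h.same_class hα hcd hqr hq.1 hr.1 hq.2 hr.2)
  have diff2 : ∀ α, (α = s ∨ α = -s) → (S α (-α)).card ≤ 2 := by
    intro α hα
    by_contra hc
    push Not at hc
    obtain ⟨p, hp, q, hq, r, hr, hpq, hpr, hqr⟩ := Finset.two_lt_card.mp hc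
    simp only [hS, Finset.mem_filter, Finset.mem_univ, true_and] at hp hq hr
    exact h.triple hα (Or.inr rfl) hp.1 hq.1 hr.1
      (h.diff_class hα hcd hpq hp.1 hq.1 hp.2 hq.2)
      (h.diff_class hα hcd hpr hp.1 hr.1 hp.2 hr.2)
      (h.diff_class hα hcd hqr hq.1 hr.1 hq.2 hr.2)
  have anti1 : ∀ i, (Finset.univ.filter (fun j => g i j = -1)).card ≤ 1 := by
    intro i
    rw [Finset.card_le_one]
    intro j hj k hk
    simp only [Finset.mem_filter, Finset.mem_univ, true_and] at hj hk
    exact h.anti i j k hj hk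
  have cover : (Finset.univ : Finset (Fin 12)) ⊆ {c, d} ∪
      (Finset.univ.filter (fun j => g c j = -1) ∪ Finset.univ.filter (fun j => g d j = -1)) ∪
      (S s s ∪ S (-s) (-s)) ∪ (S s (-s) ∪ S (-s) (- -s)) := by
    intro j _
    by_cases hjc : j = c
    · simp [hjc]
    by_cases hjd : j = d
    · simp [hjd]
    simp only [hS, Finset.mem_union, Finset.mem_filter, Finset.mem_univ, true_and, neg_neg]
    rcases h.off c j (Ne.symm hjc) with e | e | e <;>
    rcases h.off d j (Ne.symm hjd) with e' | e' | e' <;> simp [e, e']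
  have hcard := Finset.card_le_card cover
  have u1 := Finset.card_union_le ({c, d} ∪
      (Finset.univ.filter (fun j => g c j = -1) ∪ Finset.univ.filter (fun j => g d j = -1)) ∪
      (S s s ∪ S (-s) (-s))) (S s (-s) ∪ S (-s) (- -s))
  have u2 := Finset.card_union_le ({c, d} ∪
      (Finset.univ.filter (fun j => g c j = -1) ∪ Finset.univ.filter (fun j => g d j = -1)))
      (S s s ∪ S (-s) (-s))
  have u3 := Finset.card_union_le {c, d}
      (Finset.univ.filter (fun j => g c j = -1) ∪ Finset.univ.filter (fun j => g d j = -1))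
  have u4 := Finset.card_union_le (Finset.univ.filter (fun j => g c j = -1))
    (Finset.univ.filter (fun j => g d j = -1))
  have u5 := Finset.card_union_le (S s s) (S (-s) (-s))
  have u6 := Finset.card_union_le (S s (-s)) (S (-s) (- -s))
  have u7 : ({c, d} : Finset (Fin 12)).card ≤ 2 := Finset.card_le_two
  have v1 := anti1 c
  have v2 := anti1 d
  have v3 := same2 (-s) (Or.inr rfl)
  have v4 := diff2 s (Or.inl rfl)
  have v5 := diff2 (-s) (Or.inr rfl)
  rw [Finset.card_univ, Fintype.card_fin] at hcard
  have : 1 < (S s s).card := by omega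
  obtain ⟨p, hp, q, hq, hpq⟩ := Finset.one_lt_card.mp this
  simp only [hS, Finset.mem_filter, Finset.mem_univ, true_and] at hp hq
  exact ⟨p, q, hp.1, hq.1, hp.2, hq.2,
    h.same_class (Or.inl rfl) hcd hpq hp.1 hq.1 hp.2 hq.2⟩

end Ideal12
end Ico

namespace Ico

lemma div_close {u v u' v' p r m : ℝ} (hv : m ≤ v') (hm : 0 < m) (hu : |u| ≤ 1)
    (h1 : |u * v - u' * v'| ≤ p) (h2 : |v - v'| ≤ r) : m * |u - u'| ≤ p + r := by
  have e : (u - u') * v' = (u * v - u' * v') - u * (v - v') := by ring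
  have e1 : |(u - u') * v'| ≤ p + r := by
    rw [e]
    refine (abs_sub _ _).trans ?_
    rw [abs_mul]
    nlinarith [abs_nonneg (v - v'), abs_nonneg u]
  rw [abs_mul, abs_of_pos (by linarith : 0 < v')] at e1
  nlinarith [abs_nonneg (u - u')]

lemma sqrt_close {v v' p m : ℝ} (hv : m ≤ v') (hm : 0 < m) (h0 : 0 ≤ v)
    (h1 : |v * v - v' * v'| ≤ p) : m * |v - v'| ≤ p := by
  have e : v * v - v' * v' = (v - v') * (v + v') := by ring
  rw [e, abs_mul, abs_of_pos (by linarith : 0 < v + v')] at h1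
  nlinarith [abs_nonneg (v - v')]

lemma unit_coord {y : Fin 3 → ℝ} (h : y 0 * y 0 + y 1 * y 1 + y 2 * y 2 = 1) (m : Fin 3) :
    |y m| ≤ 1 := by
  have h0 : |y 0| ≤ 1 := by
    apply abs_le_of_sq_le_sq _ zero_le_one
    nlinarith [sq_nonneg (y 1), sq_nonneg (y 2)]
  have h1 : |y 1| ≤ 1 := by
    apply abs_le_of_sq_le_sq _ zero_le_one
    nlinarith [sq_nonneg (y 0), sq_nonneg (y 2)]
  have h2 : |y 2| ≤ 1 := by
    apply abs_le_of_sq_le_sq _ zero_le_one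
    nlinarith [sq_nonneg (y 0), sq_nonneg (y 1)]
  fin_cases m
  exacts [h0, h1, h2]

lemma tri_close (X W : Fin 12 → Fin 3 → ℝ) (a b c : Fin 12) (τ : ℝ)
    (X1 : ∀ i, X i 0 * X i 0 + X i 1 * X i 1 + X i 2 * X i 2 = 1)
    (W1 : ∀ i, W i 0 * W i 0 + W i 1 * W i 1 + W i 2 * W i 2 = 1)
    (hXa0 : X a 0 = 1) (hXa1 : X a 1 = 0) (hXa2 : X a 2 = 0) (hXb2 : X b 2 = 0)
    (hXb1 : 0 ≤ X b 1) (hXc2 : 0 ≤ X c 2)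
    (hWa0 : W a 0 = 1) (hWa1 : W a 1 = 0) (hWa2 : W a 2 = 0) (hWb2 : W b 2 = 0)
    (hWb1 : 0.8 ≤ W b 1) (hWc2 : 0.5 ≤ W c 2)
    (H : ∀ i j, |(X i 0 * X j 0 + X i 1 * X j 1 + X i 2 * X j 2) -
      (W i 0 * W j 0 + W i 1 * W j 1 + W i 2 * W j 2)| ≤ τ) (i : Fin 12) :
    |X i 0 - W i 0| ≤ τ ∧ |X i 1 - W i 1| ≤ 7 * τ ∧ |X i 2 - W i 2| ≤ 98 * τ := by
  have bX : ∀ i m, |X i m| ≤ 1 := by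
    intro i m
    exact unit_coord (X1 i) m
  have bW : ∀ i m, |W i m| ≤ 1 := by
    intro i m
    exact unit_coord (W1 i) m
  have c0 : ∀ i, |X i 0 - W i 0| ≤ τ := by
    intro i
    have := H i a
    rw [hXa0, hXa1, hXa2, hWa0, hWa1, hWa2] at this
    simpa using this
  have hτ : 0 ≤ τ := (abs_nonneg _).trans (c0 a)
  have p0 : ∀ i j, |X i 0 * X j 0 - W i 0 * W j 0| ≤ τ + τ := fun i j =>
    abs_mul_sub (bX _ _) (bW _ _) (c0 i) (c0 j)
  have m1 : ∀ i, |X i 1 * X b 1 - W i 1 * W b 1| ≤ 3 * τ := by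
    intro i
    have h1 := H i b
    have h2 := p0 i b
    rw [hXb2, hWb2] at h1
    rw [abs_le] at *
    constructor <;> linarith
  have m1b : |X b 1 * X b 1 - W b 1 * W b 1| ≤ 2 * τ := by
    have h1 := X1 b
    have h3 := W1 b
    have h2 := p0 b b
    rw [hXb2] at h1
    rw [hWb2] at h3
    rw [abs_le] at *
    constructor <;> linarith
  have d1 := sqrt_close hWb1 (by norm_num) hXb1 m1b
  have c1 : ∀ i, |X i 1 - W i 1| ≤ 7 * τ := by
    intro i
    have := div_close (r := 2.5 * τ) hWb1 (by norm_num) (bX i 1) (m1 i) (by linarith)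
    linarith
  have p1 : ∀ i j, |X i 1 * X j 1 - W i 1 * W j 1| ≤ 7 * τ + 7 * τ := fun i j =>
    abs_mul_sub (bX _ _) (bW _ _) (c1 i) (c1 j)
  have m2 : ∀ i, |X i 2 * X c 2 - W i 2 * W c 2| ≤ 17 * τ := by
    intro i
    have h1 := H i c
    have h2 := p0 i c
    have h3 := p1 i c
    rw [abs_le] at *
    constructor <;> linarith
  have m2c : |X c 2 * X c 2 - W c 2 * W c 2| ≤ 16 * τ := by
    have h1 := X1 c
    have h3 := W1 c
    have h2 := p0 c c
    have h4 := p1 c c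
    rw [abs_le] at *
    constructor <;> linarith
  have d2 := sqrt_close hWc2 (by norm_num) hXc2 m2c
  have c2 : |X i 2 - W i 2| ≤ 98 * τ := by
    have := div_close (r := 32 * τ) hWc2 (by norm_num) (bX i 2) (m2 i) (by linarith)
    linarith
  exact ⟨c0 i, c1 i, c2⟩

lemma frame (x : Fin 12 → E3) (hx : ∀ i, ‖x i‖ = 1) (a b c : Fin 12) :
    ∃ e : OrthonormalBasis (Fin 3) ℝ E3, ∃ σ : Fin 3 → ℝ, (∀ m, σ m * σ m = 1) ∧
      σ 0 * ⟪e 0, x a⟫ = 1 ∧ ⟪e 1, x a⟫ = 0 ∧ ⟪e 2, x a⟫ = 0 ∧ ⟪e 2, x b⟫ = 0 ∧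
      0 ≤ σ 1 * ⟪e 1, x b⟫ ∧ 0 ≤ σ 2 * ⟪e 2, x c⟫ := by
  have hfr : Module.finrank ℝ E3 = Fintype.card (Fin 3) := by simp
  let e := InnerProductSpace.gramSchmidtOrthonormalBasis hfr ![x a, x b, x c]
  have hσ : ∀ y : ℝ, ∃ σ : ℝ, σ * σ = 1 ∧ 0 ≤ σ * y := by
    intro y
    rcases le_total 0 y with h | h
    · exact ⟨1, by norm_num, by linarith⟩
    · exact ⟨-1, by norm_num, by linarith⟩
  have e10 : ⟪e 1, x a⟫ = 0 :=
    InnerProductSpace.gramSchmidtOrthonormalBasis_inv_triangular hfr ![x a, x b, x c]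
      (i := 0) (j := 1) (by decide)
  have e20 : ⟪e 2, x a⟫ = 0 :=
    InnerProductSpace.gramSchmidtOrthonormalBasis_inv_triangular hfr ![x a, x b, x c]
      (i := 0) (j := 2) (by decide)
  have e21 : ⟪e 2, x b⟫ = 0 :=
    InnerProductSpace.gramSchmidtOrthonormalBasis_inv_triangular hfr ![x a, x b, x c]
      (i := 1) (j := 2) (by decide)
  obtain ⟨σ0, h0, h0'⟩ := hσ ⟪e 0, x a⟫
  obtain ⟨σ1, h1, h1'⟩ := hσ ⟪e 1, x b⟫
  obtain ⟨σ2, h2, h2'⟩ := hσ ⟪e 2, x c⟫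
  refine ⟨e, ![σ0, σ1, σ2], ?_, ?_, e10, e20, e21, h1', h2'⟩
  · intro m; fin_cases m <;> simp [h0, h1, h2]
  · have := e.sum_inner_mul_inner (x a) (x a)
    rw [Fin.sum_univ_three, e10, e20, real_inner_self_eq_norm_sq, hx, real_inner_comm] at this
    simp only [Matrix.cons_val]
    have h3 : (σ0 * ⟪e 0, x a⟫) ^ 2 = 1 := by
      rw [mul_pow, sq σ0, h0]; linarith
    nlinarith

lemma arccos_le {x w : E3} (hx : ‖x‖ = 1) (hw : ‖w‖ = 1) {r : ℝ} (hr : 0 ≤ r)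
    (h : ‖x - w‖ ^ 2 ≤ r ^ 2) : Real.arccos ⟪x, w⟫ ≤ 2 * r := by
  have e := norm_sub_sq_real x w
  rw [hx, hw] at e
  have hab := abs_real_inner_le_norm x w
  rw [hx, hw, abs_le] at hab
  have hpi := Real.arccos_le_pi ⟪x, w⟫
  have h0 := Real.arccos_nonneg ⟪x, w⟫
  have hc := Real.cos_le_one_sub_mul_cos_sq (x := Real.arccos ⟪x, w⟫) (by rw [abs_of_nonneg h0]; exact hpi)
  rw [Real.cos_arccos (by linarith) (by linarith)] at hc
  have hp : 0 < Real.pi := Real.pi_pos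
  have h4 : Real.pi ≤ 4 := Real.pi_le_four
  refine (le_abs_self _).trans (abs_le_of_sq_le_sq ?_ (by linarith))
  have h5 : Real.arccos ⟪x, w⟫ ^ 2 ≤ Real.pi ^ 2 / 2 * (1 - ⟪x, w⟫) := by
    have : 2 / Real.pi ^ 2 * Real.arccos ⟪x, w⟫ ^ 2 ≤ 1 - ⟪x, w⟫ := by linarith
    calc _ = Real.pi ^ 2 / 2 * (2 / Real.pi ^ 2 * Real.arccos ⟪x, w⟫ ^ 2) := by field_simp
      _ ≤ _ := by gcongr
  have h6 : Real.pi ^ 2 ≤ 16 := by nlinarith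
  have h7 : 0 ≤ 1 - ⟪x, w⟫ := by linarith [hab.2]
  have h8 : Real.pi ^ 2 / 2 * (1 - ⟪x, w⟫) ≤ 16 / 2 * (1 - ⟪x, w⟫) :=
    mul_le_mul_of_nonneg_right (by linarith) h7
  rw [mul_pow]
  linarith
end Ico

namespace Ico

/-- The nearest icosahedral inner product. -/
noncomputable def gval (t : ℝ) : ℝ :=
  if 0.9 < t then 1 else if 0.1 ≤ t then s else if t ≤ -0.7 then -1 else -s

lemma near (ε : ℝ) (h0 : 0 ≤ ε) (h1 : ε < 1 / 10 ^ 22) (x : Fin 12 → E3) (hx : ∀ i, ‖x i‖ = 1)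
    (hle : ∀ i j, i ≠ j → ⟪x i, x j⟫ ≤ s + 2 * ε)
    (hf : ∀ i j, i ≠ j → -(2200 * ε) ≤ f ⟪x i, x j⟫) :
    ∃ w : Fin 12 → E3, (∀ i, ‖w i‖ = 1) ∧
      (∀ i j, i ≠ j → ⟪w i, w j⟫ = s ∨ ⟪w i, w j⟫ = -s ∨ ⟪w i, w j⟫ = -1) ∧
      (∀ i, Real.arccos ⟪x i, w i⟫ ≤ 2 * 10 ^ 8 * ε) := by
  have hs1 := s_lo
  have hs2 := s_hi
  have hsq := s_sq
  have h1' : ε ≤ 1 / 10 ^ 22 := h1.le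
  have hn : ∀ i, ⟪x i, x i⟫ = 1 := fun i => by rw [real_inner_self_eq_norm_sq, hx]; norm_num
  have hab : ∀ i j, |⟪x i, x j⟫| ≤ 1 := fun i j => by
    have := abs_real_inner_le_norm (x i) (x j)
    rwa [hx, hx, one_mul] at this
  obtain ⟨g, hg⟩ : ∃ g : Fin 12 → Fin 12 → ℝ, ∀ i j, g i j = gval ⟪x i, x j⟫ := ⟨_, fun _ _ => rfl⟩
  have hdiag : ∀ i, g i i = 1 := fun i => by
    rw [hg, hn, gval, if_pos (by norm_num)]
  have hsym : ∀ i j, g i j = g j i := fun i j => by rw [hg, hg, real_inner_comm]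
  have hcl : ∀ i j, i ≠ j → (g i j = s ∧ |⟪x i, x j⟫ - s| ≤ 9000 * ε) ∨
      (g i j = -1 ∧ |⟪x i, x j⟫ - (-1)| ≤ 40000 * ε) ∨
      (g i j = -s ∧ |⟪x i, x j⟫ - (-s)| ≤ 2 / 10 ^ 9) := by
    intro i j hij
    have ht := hle i j hij
    norm_num at h1'
    have hlo : ¬ (0.9 < ⟪x i, x j⟫) := by push Not; linarith
    rcases classify h0 h1 (abs_le.mp (hab i j)).1 ht (hf i j hij) with ⟨ha, hb⟩ | ⟨ha, hb⟩ | ⟨ha, hb, hc⟩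
    · left; exact ⟨by rw [hg, gval, if_neg hlo, if_pos ha], hb⟩
    · right; left
      exact ⟨by rw [hg, gval, if_neg hlo, if_neg (by linarith), if_pos ha], hb⟩
    · right; right
      exact ⟨by rw [hg, gval, if_neg hlo, if_neg (by linarith), if_neg (by linarith)], hc⟩
  have hcoarse : ∀ i j, |⟪x i, x j⟫ - g i j| ≤ 2 / 10 ^ 9 := by
    intro i j
    by_cases hij : i = j
    · subst hij; rw [hn, hdiag]; norm_num
    · norm_num at h1' ⊢
      rcases hcl i j hij with ⟨e, hb⟩ | ⟨e, hb⟩ | ⟨e, hb⟩ <;> rw [e] <;> norm_num at hb ⊢ <;> linarith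
  have hval : ∀ i j, g i j = 1 ∨ g i j = s ∨ g i j = -s ∨ g i j = -1 := by
    intro i j
    by_cases hij : i = j
    · subst hij; exact Or.inl (hdiag i)
    · rcases hcl i j hij with ⟨e, hb⟩ | ⟨e, hb⟩ | ⟨e, hb⟩ <;> simp [e]
  have hI : Ideal12 g := by
    refine ⟨hsym, hdiag, ?_, ?_, ?_⟩
    · intro i j hij
      rcases hcl i j hij with ⟨e, hb⟩ | ⟨e, hb⟩ | ⟨e, hb⟩ <;> simp [e]
    · intro r c
      exact det_exact (Matrix.of fun a b => ⟪x (r a), x (c b)⟫) _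
        (det_inner_zero (fun a => x (r a)) (fun a => x (c a)))
        (fun a b => hab _ _) (fun a b => hval _ _) (fun a b => hcoarse _ _)
    · intro i j k hij hik
      by_contra hjk
      have c1 := hcoarse i j
      have c2 := hcoarse i k
      have c3 := hle j k hjk
      rw [hij, abs_le] at c1
      rw [hik, abs_le] at c2
      have e : 0 ≤ ⟪(2:ℝ) • x i + x j + x k, (2:ℝ) • x i + x j + x k⟫ := real_inner_self_nonneg
      simp only [inner_add_left, inner_add_right, inner_smul_left, inner_smul_right, hn] at e
      rw [real_inner_comm (x i) (x j), real_inner_comm (x i) (x k),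
        real_inner_comm (x j) (x k)] at e
      simp at e
      norm_num at c1 c2 h1'
      linarith [c1.1, c1.2, c2.1, c2.2]
  have hlin : ∀ i j, |⟪x i, x j⟫ - g i j| ≤ 10 ^ 6 * ε := by
    intro i j
    by_cases hij : i = j
    · subst hij; rw [hn, hdiag, sub_self, abs_zero]; positivity
    rcases hcl i j hij with ⟨e, hb⟩ | ⟨e, hb⟩ | ⟨e, hb⟩
    · rw [e]; linarith
    · rw [e]; linarith
    · obtain ⟨a, b, hia, hib, hja, hjb, hgab⟩ := hI.rhombus e
      have fine : ∀ p q, g p q = s → |⟪x p, x q⟫ - s| ≤ 9000 * ε := by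
        intro p q hpq
        by_cases epq : p = q
        · subst epq; rw [hdiag] at hpq; linarith
        rcases hcl p q epq with ⟨e, hb⟩ | ⟨e, hb⟩ | ⟨e, hb⟩
        · exact hb
        · rw [e] at hpq; linarith
        · rw [e] at hpq; linarith
      have sym' : ∀ p q, g p q = s → g q p = s := fun p q h => by rw [hsym]; exact h
      set t := ⟪x i, x j⟫ with ht
      have htj : ⟪x j, x i⟫ = t := by rw [real_inner_comm]
      have key := det_diff (Matrix.of fun p q => ⟪x (![i, j, a, b] p), x (![i, j, a, b] q)⟫)
        !![1, t, s, s; t, 1, s, s; s, s, 1, s; s, s, s, 1] (9000 * ε) (fun p q => hab _ _)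
        (by
          have a1 : |(1:ℝ)| ≤ 1 := by norm_num
          have a2 : |s| ≤ 1 := by rw [abs_le]; constructor <;> linarith
          have a3 : |t| ≤ 1 := hab i j
          intro p q
          fin_cases p <;> fin_cases q <;> first | exact a1 | exact a2 | exact a3)
        (by
          have z : ∀ y : ℝ, |y - y| ≤ 9000 * ε := fun y => by
            rw [sub_self, abs_zero]; positivity
          have z1 : ∀ p, |⟪x p, x p⟫ - 1| ≤ 9000 * ε := fun p => by rw [hn]; exact z 1
          have z2 : |⟪x j, x i⟫ - t| ≤ 9000 * ε := by rw [htj]; exact z t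
          intro p q
          fin_cases p <;> fin_cases q <;> first
            | exact z1 _ | exact z t | exact z2
            | exact fine _ _ hia | exact fine _ _ hib | exact fine _ _ hja | exact fine _ _ hjb
            | exact fine _ _ hgab
            | exact fine _ _ (sym' _ _ hia) | exact fine _ _ (sym' _ _ hib)
            | exact fine _ _ (sym' _ _ hja) | exact fine _ _ (sym' _ _ hjb)
            | exact fine _ _ (sym' _ _ hgab))
      rw [det_inner_zero (fun p => x (![i, j, a, b] p)) (fun p => x (![i, j, a, b] p)),
        zero_sub, abs_neg, det4] at key
      simp only [Matrix.of_apply, Matrix.cons_val] at key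
      rw [e]
      have ed : ∀ D : ℝ, D = (4 / 5) * ((1 - t) * (t - (-s))) → |D| ≤ 96 * (9000 * ε) →
          |t - (-s)| ≤ 10 ^ 6 * ε := by
        intro D hD hDle
        rw [abs_le] at hb
        norm_num at hb
        have : 1.4 ≤ 1 - t := by linarith [hb.1, hb.2]
        rw [hD, abs_mul, abs_mul, abs_of_pos (by norm_num : (0:ℝ) < 4 / 5),
          abs_of_pos (by linarith : 0 < 1 - t)] at hDle
        nlinarith [abs_nonneg (t - (-s))]
      refine ed _ ?_ key
      have p3 : s ^ 3 = s / 5 := by rw [pow_succ, hsq]; ring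
      ring_nf
      rw [p3, hsq]
      ring
  obtain ⟨a, b, c, W, hWa0, hWa1, hWa2, hWb2, hWb1, hWc2, hW⟩ := hI.factor
  obtain ⟨e, σ, hσ, e00, e10, e20, e21, e11, e22⟩ := frame x hx a b c
  set X : Fin 12 → Fin 3 → ℝ := fun i m => σ m * ⟪e m, x i⟫ with hX
  have hXX : ∀ i j, X i 0 * X j 0 + X i 1 * X j 1 + X i 2 * X j 2 = ⟪x i, x j⟫ := by
    intro i j
    rw [← e.sum_inner_mul_inner (x i) (x j), Fin.sum_univ_three]
    simp only [hX, real_inner_comm (e _) (x i)]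
    linear_combination ⟪e 0, x i⟫ * ⟪e 0, x j⟫ * hσ 0 + ⟪e 1, x i⟫ * ⟪e 1, x j⟫ * hσ 1 +
      ⟪e 2, x i⟫ * ⟪e 2, x j⟫ * hσ 2
  obtain ⟨w, hw⟩ : ∃ w : Fin 12 → E3, ∀ i, w i = ∑ m, (σ m * W i m) • e m := ⟨_, fun _ => rfl⟩
  have hwe : ∀ i m, ⟪e m, w i⟫ = σ m * W i m := by
    intro i m
    rw [hw, e.orthonormal.inner_right_fintype]
  have hww : ∀ i j, ⟪w i, w j⟫ = g i j := by
    intro i j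
    rw [← e.sum_inner_mul_inner (w i) (w j), Fin.sum_univ_three, hW]
    simp only [real_inner_comm (e _) (w i), hwe]
    linear_combination W i 0 * W j 0 * hσ 0 + W i 1 * W j 1 * hσ 1 + W i 2 * W j 2 * hσ 2
  have hwn : ∀ i, ‖w i‖ = 1 := by
    intro i
    have := real_inner_self_eq_norm_sq (w i)
    rw [hww, hdiag] at this
    nlinarith [norm_nonneg (w i)]
  refine ⟨w, hwn, ?_, ?_⟩
  · intro i j hij
    rw [hww]; exact hI.off i j hij
  · intro i
    obtain ⟨k0, k1, k2⟩ := tri_close X W a b c (10 ^ 6 * ε) (fun i => by rw [hXX, hn])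
      (fun i => by rw [← hW, hdiag]) e00 (by simp [hX, e10]) (by simp [hX, e20])
      (by simp [hX, e21]) e11 e22 hWa0 hWa1 hWa2 hWb2 hWb1 hWc2
      (fun i j => by rw [hXX, ← hW]; exact hlin i j) i
    have hsub : ‖x i - w i‖ ^ 2 = (X i 0 - W i 0) ^ 2 + (X i 1 - W i 1) ^ 2 +
        (X i 2 - W i 2) ^ 2 := by
      have hm : ∀ m, ⟪e m, x i - w i⟫ = σ m * (X i m - W i m) := by
        intro m
        rw [inner_sub_right, hwe]
        simp only [hX]
        linear_combination (-⟪e m, x i⟫) * hσ m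
      rw [← real_inner_self_eq_norm_sq, ← e.sum_inner_mul_inner, Fin.sum_univ_three]
      simp only [real_inner_comm (e _) (x i - w i), hm]
      linear_combination (X i 0 - W i 0) ^ 2 * hσ 0 + (X i 1 - W i 1) ^ 2 * hσ 1 +
        (X i 2 - W i 2) ^ 2 * hσ 2
    have := arccos_le (hx i) (hwn i) (r := 10 ^ 8 * ε) (by positivity) (by
      rw [hsub]
      have q0 := sq_le_sq' (abs_le.mp k0).1 (abs_le.mp k0).2
      have q1 := sq_le_sq' (abs_le.mp k1).1 (abs_le.mp k1).2
      have q2 := sq_le_sq' (abs_le.mp k2).1 (abs_le.mp k2).2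
      nlinarith [sq_nonneg ε])
    linarith

def icoP : Fin 12 → Fin 3 → ℤ := ![![0, 1, 0], ![0, 1, 0], ![0, -1, 0], ![0, -1, 0],
  ![0, 0, 1], ![0, 0, 1], ![0, 0, -1], ![0, 0, -1],
  ![1, 0, 0], ![1, 0, 0], ![-1, 0, 0], ![-1, 0, 0]]

def icoQ : Fin 12 → Fin 3 → ℤ := ![![0, 0, 1], ![0, 0, -1], ![0, 0, 1], ![0, 0, -1],
  ![1, 0, 0], ![-1, 0, 0], ![1, 0, 0], ![-1, 0, 0],
  ![0, 1, 0], ![0, -1, 0], ![0, 1, 0], ![0, -1, 0]]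

def icoA (i j : Fin 12) : ℤ := icoP i 0 * icoP j 0 + icoP i 1 * icoP j 1 + icoP i 2 * icoP j 2
  + (icoQ i 0 * icoQ j 0 + icoQ i 1 * icoQ j 1 + icoQ i 2 * icoQ j 2)

def icoB (i j : Fin 12) : ℤ := icoP i 0 * icoQ j 0 + icoP i 1 * icoQ j 1 + icoP i 2 * icoQ j 2
  + (icoQ i 0 * icoP j 0 + icoQ i 1 * icoP j 1 + icoQ i 2 * icoP j 2)
  + (icoQ i 0 * icoQ j 0 + icoQ i 1 * icoQ j 1 + icoQ i 2 * icoQ j 2)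

lemma ico_diag : ∀ i, icoA i i = 2 ∧ icoB i i = 1 := by decide

lemma ico_off : ∀ i j, i ≠ j → (icoA i j = 0 ∧ icoB i j = 1) ∨ (icoA i j = 0 ∧ icoB i j = -1) ∨
    (icoA i j = -2 ∧ icoB i j = -1) := by decide

lemma exists_ico : ∃ w : Fin 12 → E3, (∀ i, ‖w i‖ = 1) ∧
      (∀ i j, i ≠ j → ⟪w i, w j⟫ = s ∨ ⟪w i, w j⟫ = -s ∨ ⟪w i, w j⟫ = -1) := by
  obtain ⟨φ, hφ⟩ : ∃ φ : ℝ, φ = (1 + 5 * s) / 2 := ⟨_, rfl⟩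
  have hs1 := s_lo
  have hsq := s_sq
  have hφ2 : φ ^ 2 = φ + 1 := by rw [hφ]; linear_combination 25 / 4 * hsq
  have hφ0 : 0 < φ := by rw [hφ]; linarith
  have hφs : φ = s * (φ + 2) := by rw [hφ]; linear_combination -5 / 2 * hsq
  obtain ⟨N, hN0, hN⟩ : ∃ N : ℝ, 0 < N ∧ N ^ 2 = φ + 2 :=
    ⟨√(φ + 2), Real.sqrt_pos.mpr (by linarith), Real.sq_sqrt (by linarith)⟩
  obtain ⟨w, hw⟩ : ∃ w : Fin 12 → E3, ∀ i m, w i m = ((icoP i m : ℝ) + icoQ i m * φ) / N :=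
    ⟨fun i => WithLp.toLp 2 fun m => ((icoP i m : ℝ) + icoQ i m * φ) / N, fun _ _ => rfl⟩
  have hin : ∀ i j, ⟪w i, w j⟫ = ((icoA i j : ℝ) + icoB i j * φ) / (φ + 2) := by
    intro i j
    rw [inner3, ← hN]
    simp only [hw, icoA, icoB]
    push_cast
    field_simp
    linear_combination ((icoQ i 0 : ℝ) * icoQ j 0 + icoQ i 1 * icoQ j 1 + icoQ i 2 * icoQ j 2) * hφ2
  have hne : φ + 2 ≠ 0 := by linarith
  refine ⟨w, ?_, ?_⟩
  · intro i
    have := real_inner_self_eq_norm_sq (w i)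
    rw [hin, (ico_diag i).1, (ico_diag i).2] at this
    have e : (((2 : ℤ) : ℝ) + ((1 : ℤ) : ℝ) * φ) / (φ + 2) = 1 := by
      push_cast; field_simp; ring
    rw [e] at this
    nlinarith [norm_nonneg (w i)]
  · intro i j hij
    rw [hin]
    rcases ico_off i j hij with ⟨e1, e2⟩ | ⟨e1, e2⟩ | ⟨e1, e2⟩ <;> rw [e1, e2]
    · left; rw [div_eq_iff hne]; push_cast; linarith
    · right; left; rw [div_eq_iff hne]; push_cast; linarith
    · right; right; rw [div_eq_iff hne]; push_cast; linarith

lemma f_le {t ε : ℝ} (h0 : 0 ≤ ε) (ht1 : -1 ≤ t) (ht2 : t ≤ 1) (h : t ≤ s + 2 * ε) :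
    f t ≤ 12 * ε := by
  have hs1 := s_lo
  have hs2 := s_hi
  unfold f
  have a1 : 0 ≤ (t + 1) * (t + s) ^ 2 := mul_nonneg (by linarith) (sq_nonneg _)
  have a3 : (t + s) ^ 2 ≤ 3 := by nlinarith
  have a2 : (t + 1) * (t + s) ^ 2 ≤ 6 := by nlinarith [sq_nonneg (t + s)]
  calc _ ≤ (t + 1) * (t + s) ^ 2 * (2 * ε) := mul_le_mul_of_nonneg_left (by linarith) a1
    _ ≤ 6 * (2 * ε) := mul_le_mul_of_nonneg_right a2 (by linarith)
    _ = _ := by ring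

end Ico

open Ico

/-- Stability of the icosahedron: if `k ≥ 12` unit vectors in `ℝ³` have pairwise
spherical distances at least `2(φ_I - ε)` where `φ_I = (1/2)·arccos(1/√5)` and
`0 ≤ ε < 10⁻⁹`, then `k = 12` and the vectors are within spherical distance
`44⁹·25·10⁷·ε` of the vertices of a regular icosahedron inscribed in the unit sphere. -/
theorem icosahedron_stability (k : ℕ) (hk : 12 ≤ k) (ε : ℝ)
    (hε0 : 0 ≤ ε) (hε1 : ε < 1 / 10 ^ 9)
    (x : Fin k → EuclideanSpace ℝ (Fin 3))
    (hx : ∀ i, ‖x i‖ = 1)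
    (hdist : ∀ i j : Fin k, i ≠ j →
      2 * (Real.arccos (1 / Real.sqrt 5) / 2 - ε) ≤ Real.arccos ⟪x i, x j⟫) :
    k = 12 ∧
    ∃ w : Fin k → EuclideanSpace ℝ (Fin 3),
      (∀ i, ‖w i‖ = 1) ∧
      (∀ i j : Fin k, i ≠ j →
        ⟪w i, w j⟫ ∈ ({1 / Real.sqrt 5, -(1 / Real.sqrt 5), -1} : Set ℝ)) ∧
      (∀ i, Real.arccos ⟪x i, w i⟫ ≤ (44 : ℝ) ^ 9 * 25 * 10 ^ 7 * ε) := by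
  have hs1 := s_lo
  have hs2 := s_hi
  have hab : ∀ i j, |⟪x i, x j⟫| ≤ 1 := fun i j => by
    have := abs_real_inner_le_norm (x i) (x j)
    rwa [hx, hx, one_mul] at this
  have hn : ∀ i, ⟪x i, x i⟫ = 1 := fun i => by rw [real_inner_self_eq_norm_sq, hx]; norm_num
  have hle : ∀ i j, i ≠ j → ⟪x i, x j⟫ ≤ s + 2 * ε := fun i j hij =>
    inner_le_of_dist (abs_le.mp (hab i j)).1 (abs_le.mp (hab i j)).2 hε0 hε1 (hdist i j hij)
  have hfle : ∀ i j, i ≠ j → f ⟪x i, x j⟫ ≤ 12 * ε := fun i j hij =>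
    f_le hε0 (abs_le.mp (hab i j)).1 (abs_le.mp (hab i j)).2 (hle i j hij)
  have hf1 : f 1 = 8 / 5 * (1 + s) := by
    unfold f; have := s_sq; linear_combination (-2 * (1 + s)) * this
  have hdel := delsarte x hx
  -- the summands with the maximal value removed
  have hub : ∀ i j, f ⟪x i, x j⟫ ≤ 12 * ε + (if i = j then 8 / 5 * (1 + s) else 0) := by
    intro i j
    by_cases hij : i = j
    · subst hij; rw [hn, hf1, if_pos rfl]; linarith
    · rw [if_neg hij, add_zero]; exact hfle i j hij
  have hsum : ∑ i : Fin k, ∑ j : Fin k, (12 * ε + (if i = j then 8 / 5 * (1 + s) else 0)) =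
      (k : ℝ) ^ 2 * (12 * ε) + k * (8 / 5 * (1 + s)) := by
    simp [Finset.sum_add_distrib]; ring
  have hk12 : k = 12 := by
    by_contra hne
    have h13 : 13 ≤ k := by omega
    have h13' : (13 : ℝ) ≤ k := by exact_mod_cast h13
    have h1 : ∑ i, ∑ j, f ⟪x i, x j⟫ ≤ (k : ℝ) ^ 2 * (12 * ε) + k * (8 / 5 * (1 + s)) := by
      rw [← hsum]
      exact Finset.sum_le_sum fun i _ => Finset.sum_le_sum fun j _ => hub i j
    norm_num at hε1
    have h2 : (k : ℝ) * (k * (2 / 15 * (1 + s) - 12 * ε)) ≤ k * (8 / 5 * (1 + s)) := by linarith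
    have h3 := le_of_mul_le_mul_left h2 (by linarith)
    nlinarith
  refine ⟨hk12, ?_⟩
  subst hk12
  have hmem : ∀ {y : ℝ}, (y = s ∨ y = -s ∨ y = -1) →
      y ∈ ({1 / Real.sqrt 5, -(1 / Real.sqrt 5), -1} : Set ℝ) := fun h => h
  by_cases hε : ε < 1 / 10 ^ 22
  · have hlow : ∀ i j, i ≠ j → -(2200 * ε) ≤ f ⟪x i, x j⟫ := by
      intro i j hij
      have h1 : ∑ a, ∑ b, f ⟪x a, x b⟫ + (12 * ε - f ⟪x i, x j⟫) ≤
          ((12 : ℕ) : ℝ) ^ 2 * (12 * ε) + (12 : ℕ) * (8 / 5 * (1 + s)) := by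
        have e1 : 12 * ε - f ⟪x i, x j⟫ ≤
            ∑ b, (12 * ε + (if i = b then 8 / 5 * (1 + s) else 0) - f ⟪x i, x b⟫) := by
          have := Finset.single_le_sum
            (f := fun b => 12 * ε + (if i = b then 8 / 5 * (1 + s) else 0) - f ⟪x i, x b⟫)
            (fun b _ => sub_nonneg.mpr (hub i b)) (Finset.mem_univ j)
          simpa [hij] using this
        have e2 := Finset.single_le_sum
            (f := fun a => ∑ b, (12 * ε + (if a = b then 8 / 5 * (1 + s) else 0) - f ⟪x a, x b⟫))
            (fun a _ => Finset.sum_nonneg fun b _ => sub_nonneg.mpr (hub a b)) (Finset.mem_univ i)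
        simp only [Finset.sum_sub_distrib] at e1 e2
        rw [hsum] at e2
        linarith
      push_cast at h1 hdel
      linarith
    obtain ⟨w, w1, w2, w3⟩ := near ε hε0 hε x hx hle hlow
    refine ⟨w, w1, fun i j hij => hmem (w2 i j hij), fun i => (w3 i).trans ?_⟩
    apply mul_le_mul_of_nonneg_right _ hε0
    norm_num
  · push Not at hε
    obtain ⟨w, w1, w2⟩ := exists_ico
    refine ⟨w, w1, fun i j hij => hmem (w2 i j hij), fun i => ?_⟩
    refine (Real.arccos_le_pi _).trans (Real.pi_le_four.trans ?_)
    calc (4 : ℝ) ≤ (44 : ℝ) ^ 9 * 25 * 10 ^ 7 * (1 / 10 ^ 22) := by norm_num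
      _ ≤ _ := by gcongr
end
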